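/- (Tangential quasiconvexity of Tf_hom) For every s ∈ M, every ξ ∈ [T_s M]^N and every φ ∈ W^{1,∞}_0(Q; T_s M), where Q = (−1/2,1/2)^N, one has Tf_hom(s,ξ) ≤ ∫_Q Tf_hom(s, ξ + ∇φ(y)) dy. In particular, ξ ↦ Tf_hom(s,ξ) is rank-one convex on [T_s M]^N. -/

import Mathlib

open MeasureTheory Filter Set
open scoped ENNReal RealInnerProductSpace Topology NNReal

noncomputable section

/-- Euclidean space `ℝ^N`. -/
abbrev EN (N : ℕ) : Type := EuclideanSpace ℝ (Fin N)

/-- `d × N` matrices, viewed as continuous linear maps `ℝ^N → ℝ^d`. -/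
abbrev Mat (d N : ℕ) : Type := EN N →L[ℝ] EN d

variable {N d : ℕ}

/-- The tangent set of `M ⊆ ℝ^d` at `s`: velocities of curves in `M` through `s`. -/
def TangentSet (M : Set (EN d)) (s : EN d) : Set (EN d) :=
  {v | ∃ γ : ℝ → EN d, (∀ t, γ t ∈ M) ∧ γ 0 = s ∧ HasDerivAt γ v 0}

/-- A matrix `ξ ∈ ℝ^{d×N}` has all its columns in the tangent space `T_s M`,
i.e. `ξ ∈ [T_s M]^N`. -/
def TangentCols (M : Set (EN d)) (s : EN d) (ξ : Mat d N) : Prop :=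
  ∀ i : Fin N, ξ (EuclideanSpace.single i 1) ∈ TangentSet M s

/-- `T` is a smooth `m`-dimensional submanifold (without boundary) of `ℝ^n`,
described locally as a regular level set. -/
def IsSubmanifoldDim (n m : ℕ) (T : Set (EN n)) : Prop :=
  ∀ x ∈ T, ∃ (U : Set (EN n)) (F : EN n → EN (n - m)),
    IsOpen U ∧ x ∈ U ∧ ContDiffOn ℝ (⊤ : ℕ∞) F U ∧
    (T ∩ U = {y ∈ U | F y = 0}) ∧ ∀ y ∈ U, Function.Surjective (fderiv ℝ F y)

/-- `M` is a nonempty compact connected smooth submanifold of `ℝ^d` without boundary. -/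
def IsNiceManifold (d : ℕ) (M : Set (EN d)) : Prop :=
  M.Nonempty ∧ IsCompact M ∧ IsConnected M ∧ ∃ m : ℕ, m ≤ d ∧ IsSubmanifoldDim d m M

/-- A finite union of subsets of `(N-2)`-dimensional submanifolds of `ℝ^N`. -/
def IsSigmaSet (N : ℕ) (Sg : Set (EN N)) : Prop :=
  ∃ (k : ℕ) (S : Fin k → Set (EN N)), Sg = ⋃ i, S i ∧
    ∀ i, ∃ T : Set (EN N), IsSubmanifoldDim N (N - 2) T ∧ S i ⊆ T

/-- `u ∈ W^{1,1}(A;ℝ^d)` with weak gradient `Du`. -/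
def MemW11 (A : Set (EN N)) (u : EN N → EN d) (Du : EN N → Mat d N) : Prop :=
  IntegrableOn u A volume ∧ IntegrableOn Du A volume ∧
    ∀ φ : EN N → ℝ, ContDiff ℝ (⊤ : ℕ∞) φ → HasCompactSupport φ → tsupport φ ⊆ A →
      ∀ y : EN N, ∫ x in A, fderiv ℝ φ x y • u x = - ∫ x in A, φ x • Du x y

/-- `u` takes values in `M` almost everywhere on `A`. -/
def AeIn (A : Set (EN N)) (u : EN N → EN d) (M : Set (EN d)) : Prop :=
  ∀ᵐ x ∂(volume.restrict A), u x ∈ M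

/-- Recession function of `h : ℝ^{d×N} → ℝ`: `h^∞(ξ) = limsup_{t→∞} h(tξ)/t`. -/
def recc (h : Mat d N → ℝ) (ξ : Mat d N) : ℝ :=
  Filter.limsup (fun t : ℝ => h (t • ξ) / t) Filter.atTop

/-- The open cube `(0,t)^N`. -/
def posCube (N : ℕ) (t : ℝ) : Set (EN N) := {x | ∀ i, x i ∈ Set.Ioo (0 : ℝ) t}

/-- The open unit cube `(-1/2,1/2)^N`. -/
def unitCube (N : ℕ) : Set (EN N) := {x | ∀ i, x i ∈ Set.Ioo (-(1/2) : ℝ) (1/2)}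

/-- The cell infimum over `W^{1,∞}_0((0,t)^N; T_s M)` defining `Tf_hom`. -/
def tanCell (f : EN N → Mat d N → ℝ) (M : Set (EN d)) (s : EN d) (ξ : Mat d N)
    (t : ℝ) : ℝ :=
  sInf {c : ℝ | ∃ (φ : EN N → EN d) (K : ℝ≥0), LipschitzWith K φ ∧
    (∀ x, φ x ∈ TangentSet M s) ∧ (∀ x, x ∉ posCube N t → φ x = 0) ∧
    c = (t ^ N)⁻¹ * ∫ x in posCube N t, f x (ξ + fderiv ℝ φ x)}

/-- The tangentially homogenized density `Tf_hom` (the limit as `t → ∞`,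
realized as a limsup). -/
def Tfhom (f : EN N → Mat d N → ℝ) (M : Set (EN d)) (s : EN d) (ξ : Mat d N) : ℝ :=
  Filter.limsup (fun t => tanCell f M s ξ t) Filter.atTop

/-- The unconstrained cell infimum over `W^{1,∞}_0((0,t)^N; ℝ^d)`. -/
def freeCell (h : EN N → Mat d N → ℝ) (ξ : Mat d N) (t : ℝ) : ℝ :=
  sInf {c : ℝ | ∃ (φ : EN N → EN d) (K : ℝ≥0), LipschitzWith K φ ∧
    (∀ x, x ∉ posCube N t → φ x = 0) ∧
    c = (t ^ N)⁻¹ * ∫ x in posCube N t, h x (ξ + fderiv ℝ φ x)}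

/-- The usual homogenized density of a parametrized integrand `g(y,s,ξ)`. -/
def ghomOf (g : EN N → EN d → Mat d N → ℝ) (s : EN d) (ξ : Mat d N) : ℝ :=
  Filter.limsup (fun t => freeCell (fun y => g y s) ξ t) Filter.atTop

/-- The open cube of side `t` centered at the origin adapted to the
orthonormal basis `B`. -/
def obCube (B : OrthonormalBasis (Fin N) ℝ (EN N)) (t : ℝ) : Set (EN N) :=
  {x | ∀ i, ⟪x, B i⟫ ∈ Set.Ioo (-(t / 2)) (t / 2)}

/-- Surface cell infimum at scale `t`: infimum of `t^{1-N} ∫_{tQ_ν} h(y,∇φ)` over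
`φ ∈ W^{1,1}(tQ_ν;M)` with `φ = a` on `∂(tQ_ν) ∩ {x·ν₁ > 0}` and `φ = b`
on `∂(tQ_ν) ∩ {x·ν₁ ≤ 0}`. -/
def surfCell (h : EN N → Mat d N → ℝ) (M : Set (EN d)) (a b : EN d) (ν₁ : EN N)
    (B : OrthonormalBasis (Fin N) ℝ (EN N)) (t : ℝ) : ℝ :=
  sInf {c : ℝ | ∃ (φ : EN N → EN d) (Dφ : EN N → Mat d N),
    MemW11 (obCube B t) φ Dφ ∧ AeIn (obCube B t) φ M ∧
    (∀ x ∈ frontier (obCube B t),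
      (0 < ⟪x, ν₁⟫ → φ x = a) ∧ (⟪x, ν₁⟫ ≤ 0 → φ x = b)) ∧
    c = (t ^ (N - 1))⁻¹ * ∫ x in obCube B t, h x (Dφ x)}

/-- Surface cell infimum where moreover the adapted cube is chosen with two of
its faces orthogonal to `ν₁`. -/
def thetaCell (h : EN N → Mat d N → ℝ) (M : Set (EN d)) (a b : EN d) (ν₁ : EN N)
    (t : ℝ) : ℝ :=
  sInf {c : ℝ | ∃ B : OrthonormalBasis (Fin N) ℝ (EN N), (∃ i, B i = ν₁) ∧
    c = surfCell h M a b ν₁ B t}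

/-- The homogenized surface energy density `θ_hom` (built from `f^∞`). -/
def thetaHom (f : EN N → Mat d N → ℝ) (M : Set (EN d)) (a b : EN d) (ν₁ : EN N) : ℝ :=
  Filter.limsup (fun t => thetaCell (fun y => recc (f y)) M a b ν₁ t) Filter.atTop

/-- Strong `L¹(A;ℝ^d)`-convergence of a family `v ε → u` as `ε → 0⁺`. -/
def TendstoL1 (A : Set (EN N)) (v : ℝ → EN N → EN d) (u : EN N → EN d) : Prop :=
  Filter.Tendsto (fun ε => ∫ x in A, ‖v ε x - u x‖) (nhdsWithin 0 (Set.Ioi 0)) (nhds 0)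

/-- Γ-convergence as `ε → 0⁺` of the family `Fε` at the point `u`
(for the strong `L¹(A)`-topology) to the value `c`. -/
def GammaConvergesAt (Fε : ℝ → (EN N → EN d) → ℝ≥0∞) (A : Set (EN N))
    (u : EN N → EN d) (c : ℝ≥0∞) : Prop :=
  (∀ v : ℝ → EN N → EN d, TendstoL1 A v u →
      c ≤ Filter.liminf (fun ε => Fε ε (v ε)) (nhdsWithin 0 (Set.Ioi 0))) ∧
  (∃ v : ℝ → EN N → EN d, TendstoL1 A v u ∧
      Filter.limsup (fun ε => Fε ε (v ε)) (nhdsWithin 0 (Set.Ioi 0)) ≤ c)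

/-- The localized functional `F_ε(u,A) = ∫_A f(x/ε,∇u) dx` if
`u ∈ W^{1,1}(A;M)`, and `+∞` otherwise. -/
def FepsSet (f : EN N → Mat d N → ℝ) (M : Set (EN d)) (ε : ℝ) (u : EN N → EN d)
    (A : Set (EN N)) : ℝ≥0∞ :=
  ⨅ (Du : EN N → Mat d N) (_ : MemW11 A u Du ∧ AeIn A u M),
    ENNReal.ofReal (∫ x in A, f (ε⁻¹ • x) (Du x))

/-- The localized Γ-lower limit
`F(u,A) = inf { liminf_n F_{ε_n}(u_n,A) : u_n → u in L¹(A) }`. -/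
def GammaLow (f : EN N → Mat d N → ℝ) (M : Set (EN d)) (εseq : ℕ → ℝ)
    (u : EN N → EN d) (A : Set (EN N)) : ℝ≥0∞ :=
  ⨅ (v : ℕ → EN N → EN d)
    (_ : Filter.Tendsto (fun n => ∫ x in A, ‖v n x - u x‖) Filter.atTop (nhds 0)),
    Filter.liminf (fun n => FepsSet f M (εseq n) (v n) A) Filter.atTop

/-- Extension of `F(u,·)` to arbitrary sets `B ⊆ Ω` by outer regularity. -/
def GammaLowB (f : EN N → Mat d N → ℝ) (M : Set (EN d)) (εseq : ℕ → ℝ)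
    (u : EN N → EN d) (Ω B : Set (EN N)) : ℝ≥0∞ :=
  ⨅ (A : Set (EN N)) (_ : IsOpen A ∧ A ⊆ Ω ∧ B ⊆ A), GammaLow f M εseq u A

/-- A package certifying `u ∈ BV(Ω;ℝ^d)`, with all its measure-theoretic
attributes: absolutely continuous gradient `grad = ∇u`, approximate
discontinuity (jump) set `S`, traces `up = u⁺`, `um = u⁻`, normal `nu = ν_u`,
approximate limit `ap = ũ`, Cantor part `cm = |D^c u|` with polar density
`cd = dD^cu/d|D^cu|`. -/
structure BVPack (Ω : Set (EN N)) (u : EN N → EN d) where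
  grad : EN N → Mat d N
  S : Set (EN N)
  up : EN N → EN d
  um : EN N → EN d
  nu : EN N → EN N
  ap : EN N → EN d
  cm : Measure (EN N)
  cd : EN N → Mat d N
  integrable : IntegrableOn u Ω volume
  grad_int : IntegrableOn grad Ω volume
  S_meas : MeasurableSet S
  cm_fin : cm Set.univ ≠ ⊤
  cm_in : cm Ωᶜ = 0
  jump_int : IntegrableOn (fun x => ‖up x - um x‖) (Ω ∩ S) (μH[(N : ℝ) - 1])
  nu_unit : ∀ x ∈ S, ‖nu x‖ = 1
  jump_ne : ∀ x ∈ S, up x ≠ um x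
  cd_unit : ∀ᵐ x ∂cm, ‖cd x‖ = 1
  cm_sing : cm ⟂ₘ (volume : Measure (EN N))
  cm_nojump : cm S = 0
  ap_lim : ∀ x ∈ Ω \ S,
    Filter.Tendsto
      (fun r : ℝ => (volume (Metric.ball x r)).toReal⁻¹ *
        ∫ y in Metric.ball x r, ‖u y - ap x‖)
      (nhdsWithin 0 (Set.Ioi 0)) (nhds 0)
  jump_lim_up : ∀ x ∈ Ω ∩ S,
    Filter.Tendsto
      (fun r : ℝ => (volume (Metric.ball x r)).toReal⁻¹ *
        ∫ y in {y ∈ Metric.ball x r | 0 < ⟪y - x, nu x⟫}, ‖u y - up x‖)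
      (nhdsWithin 0 (Set.Ioi 0)) (nhds 0)
  jump_lim_um : ∀ x ∈ Ω ∩ S,
    Filter.Tendsto
      (fun r : ℝ => (volume (Metric.ball x r)).toReal⁻¹ *
        ∫ y in {y ∈ Metric.ball x r | ⟪y - x, nu x⟫ < 0}, ‖u y - um x‖)
      (nhdsWithin 0 (Set.Ioi 0)) (nhds 0)
  decomp : ∀ φ : EN N → ℝ, ContDiff ℝ (⊤ : ℕ∞) φ → HasCompactSupport φ → tsupport φ ⊆ Ω →
    ∀ y : EN N,
      ∫ x in Ω, fderiv ℝ φ x y • u x =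
        -(∫ x in Ω, φ x • grad x y) - (∫ x, φ x • cd x y ∂cm) -
          ∫ x in Ω ∩ S, (⟪nu x, y⟫ * φ x) • (up x - um x) ∂(μH[(N : ℝ) - 1])

/-- The total variation measure `|Du|` associated to a BV package. -/
def totalVar (Ω : Set (EN N)) (u : EN N → EN d) (P : BVPack Ω u) : Measure (EN N) :=
  ((volume.restrict Ω).withDensity fun x => ENNReal.ofReal ‖P.grad x‖) + P.cm +
    ((μH[(N : ℝ) - 1]).restrict (Ω ∩ P.S)).withDensity
      fun x => ENNReal.ofReal ‖P.up x - P.um x‖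

/-- The standing assumptions (Carathéodory, (H1), (H2), (H3)) on the
integrand `f`. -/
structure StdIntegrand (N d : ℕ) (f : EN N → Mat d N → ℝ) (α β L : ℝ) : Prop where
  meas : ∀ ξ : Mat d N, Measurable fun y => f y ξ
  nonneg : ∀ y ξ, 0 ≤ f y ξ
  periodic : ∀ (y : EN N) (ξ : Mat d N) (i : Fin N),
    f (y + EuclideanSpace.single i 1) ξ = f y ξ
  alpha_pos : 0 < α
  alpha_le_beta : α ≤ β
  growth : ∀ᵐ y ∂(volume : Measure (EN N)), ∀ ξ,
    α * ‖ξ‖ ≤ f y ξ ∧ f y ξ ≤ β * (1 + ‖ξ‖)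
  lip_pos : 0 < L
  lip : ∀ᵐ y ∂(volume : Measure (EN N)), ∀ ξ ξ', |f y ξ - f y ξ'| ≤ L * ‖ξ - ξ'‖

/-- Hypothesis (H4): `|f(y,ξ) - f^∞(y,ξ)| ≤ C(1+|ξ|^{1-q})`. -/
def H4 (f : EN N → Mat d N → ℝ) (C q : ℝ) : Prop :=
  0 < C ∧ 0 < q ∧ q < 1 ∧
    ∀ᵐ y ∂(volume : Measure (EN N)), ∀ ξ,
      |f y ξ - recc (f y) ξ| ≤ C * (1 + ‖ξ‖ ^ (1 - q))

/-- The projection data used to build the modified integrand `g`: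
`pr` is the nearest-point projection onto `M` on a `δ₀`-neighborhood,
`tanProj s` is the orthogonal projection of `ℝ^d` onto `T_s M` (for `s ∈ M`),
and `chi` is the smooth cut-off. -/
structure ProjData {d : ℕ} (M : Set (EN d)) where
  δ₀ : ℝ
  pr : EN d → EN d
  chi : EN d → ℝ
  tanProj : EN d → EN d →L[ℝ] EN d
  δ₀_pos : 0 < δ₀
  pr_mem : ∀ s, Metric.infDist s M < δ₀ → pr s ∈ M
  pr_nearest : ∀ s, Metric.infDist s M < δ₀ → ‖s - pr s‖ = Metric.infDist s M
  pr_lip : ∃ K : ℝ≥0, LipschitzOnWith K pr {s | Metric.infDist s M < δ₀}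
  tanProj_lip : ∃ K : ℝ≥0,
    LipschitzOnWith K (fun s => tanProj (pr s)) {s | Metric.infDist s M < δ₀}
  chi_smooth : ContDiff ℝ (⊤ : ℕ∞) chi
  chi_supp : HasCompactSupport chi
  chi_range : ∀ s, chi s ∈ Set.Icc (0 : ℝ) 1
  chi_one : ∀ s, Metric.infDist s M ≤ δ₀ / 2 → chi s = 1
  chi_zero : ∀ s, 3 * δ₀ / 4 ≤ Metric.infDist s M → chi s = 0
  tanProj_mem : ∀ s ∈ M, ∀ v, tanProj s v ∈ TangentSet M s
  tanProj_id : ∀ s ∈ M, ∀ v ∈ TangentSet M s, tanProj s v = v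
  tanProj_symm : ∀ s ∈ M, ∀ v w, ⟪tanProj s v, w⟫ = ⟪v, tanProj s w⟫

/-- The cut-off tangential projection `ℙ_s(ξ) = χ(s) P_{Π(s)} ∘ ξ`. -/
def tanP {M : Set (EN d)} (D : ProjData M) (s : EN d) (ξ : Mat d N) : Mat d N :=
  D.chi s • ((D.tanProj (D.pr s)).comp ξ)

/-- The modified integrand `g(y,s,ξ) = f(y,ℙ_s(ξ)) + |ξ - ℙ_s(ξ)|`. -/
def gOf {M : Set (EN d)} (D : ProjData M) (f : EN N → Mat d N → ℝ) :
    EN N → EN d → Mat d N → ℝ :=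
  fun y s ξ => f y (tanP D s ξ) + ‖ξ - tanP D s ξ‖

/-- The geodesic distance on `M`. -/
def geoDist (M : Set (EN d)) (a b : EN d) : ℝ :=
  sInf {l : ℝ | ∃ γ : ℝ → EN d, ContDiff ℝ (⊤ : ℕ∞) γ ∧ (∀ t, γ t ∈ M) ∧
    γ 0 = b ∧ γ 1 = a ∧ l = ∫ t in Set.Icc (0 : ℝ) 1, ‖deriv γ t‖}

/-- The class `G(a,b)` of geodesic curves between `a` and `b`. -/
def GeodClass (M : Set (EN d)) (a b : EN d) : Set (ℝ → EN d) :=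
  {γ | ContDiff ℝ (⊤ : ℕ∞) γ ∧ (∀ t, γ t ∈ M) ∧ (∀ t : ℝ, 1 / 2 ≤ t → γ t = a) ∧
    (∀ t : ℝ, t ≤ -(1 / 2 : ℝ) → γ t = b) ∧
    (∫ t : ℝ, ‖deriv γ t‖) = geoDist M a b}

/-- `I_ε(a,b,ν)`: infimum of `∫_{Q_ν} h(x/ε,∇u)` over the geodesic-boundary
class `B_ε(a,b,ν)`. -/
def Ieps (h : EN N → Mat d N → ℝ) (M : Set (EN d)) (a b : EN d) (ν₁ : EN N)
    (B : OrthonormalBasis (Fin N) ℝ (EN N)) (ε : ℝ) : ℝ :=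
  sInf {c : ℝ | ∃ (φ : EN N → EN d) (Dφ : EN N → Mat d N) (γ : ℝ → EN d),
    γ ∈ GeodClass M a b ∧ MemW11 (obCube B 1) φ Dφ ∧ AeIn (obCube B 1) φ M ∧
    (∀ x ∈ frontier (obCube B 1), φ x = γ (⟪x, ν₁⟫ / ε)) ∧
    c = ∫ x in obCube B 1, h (ε⁻¹ • x) (Dφ x)}

/-- `J_ε(a,b,ν)`: infimum of `∫_{Q_ν} h(x/ε,∇u)` with sharp-interface boundary
datum `u_{a,b,ν}`. -/
def Jeps (h : EN N → Mat d N → ℝ) (M : Set (EN d)) (a b : EN d) (ν₁ : EN N)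
    (B : OrthonormalBasis (Fin N) ℝ (EN N)) (ε : ℝ) : ℝ :=
  sInf {c : ℝ | ∃ (φ : EN N → EN d) (Dφ : EN N → Mat d N),
    MemW11 (obCube B 1) φ Dφ ∧ AeIn (obCube B 1) φ M ∧
    (∀ x ∈ frontier (obCube B 1),
      (0 < ⟪x, ν₁⟫ → φ x = a) ∧ (⟪x, ν₁⟫ ≤ 0 → φ x = b)) ∧
    c = ∫ x in obCube B 1, h (ε⁻¹ • x) (Dφ x)}

/-- The defining properties of the interfacial density `K` from the integral
representation on partitions. -/
def IsJumpRepr (Ω : Set (EN N)) (f : EN N → Mat d N → ℝ) (M : Set (EN d))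
    (εseq : ℕ → ℝ) (K : EN d → EN d → EN N → ℝ) : Prop :=
  (∀ a ∈ M, ∀ b ∈ M, ∀ ν₁ : EN N, ‖ν₁‖ = 1 → 0 ≤ K a b ν₁) ∧
  (∀ a ∈ M, ∀ b ∈ M, ContinuousOn (K a b) (Metric.sphere (0 : EN N) 1)) ∧
  (∀ a ∈ M, ∀ b ∈ M, ∀ ν₁ : EN N, ‖ν₁‖ = 1 → K a b ν₁ = K b a (-ν₁)) ∧
  (∀ T : Finset (EN d), (T : Set (EN d)) ⊆ M →
    ∀ (u : EN N → EN d) (P : BVPack Ω u),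
      (∀ᵐ x ∂(volume.restrict Ω), u x ∈ (T : Set (EN d))) →
      ∀ S : Set (EN N), MeasurableSet S → S ⊆ Ω ∩ P.S →
        GammaLowB f M εseq u Ω S =
          ENNReal.ofReal
            (∫ x in S, K (P.up x) (P.um x) (P.nu x) ∂(μH[(N : ℝ) - 1])))

end

/-!
On the tangent space `V = T_s M`, the density `Tf_hom(s, ·)` is the limit of the cell infima
`t⁻ᴺ inf ∫_{(0,t)^N} f(y, ξ + ∇φ)`. Given a test field `φ` on the unit cube, rescale it to a cube
of side `k n` and add, in each of the `k^N` subcubes of side `n`, a nearly optimal competitor for an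
average `ζ` of the gradient there. By periodicity each subcube contributes a cell infimum at `ζ`,
and the error is controlled by the `L¹` distance between `∇φ` and a step function. First `k → ∞`,
then `n → ∞` gives quasiconvexity. Testing it with finely oscillating sawtooth laminates, cut off
near the boundary of the cube, gives convexity along rank-one segments.
-/

/-! ### The tangent set of a submanifold -/

section TangentSpace

variable {N d : ℕ} {M : Set (EN d)} {s v : EN d}

theorem mem_tangentSet_of_eventually (hs : s ∈ M) {γ : ℝ → EN d} (hγM : ∀ᶠ t in 𝓝 0, γ t ∈ M)
    (hγ₀ : γ 0 = s) (hγ : HasDerivAt γ v 0) : v ∈ TangentSet M s := by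
  classical
  refine ⟨fun t => if γ t ∈ M then γ t else s, fun t => ?_, ?_, ?_⟩
  · dsimp only
    split_ifs with h
    exacts [h, hs]
  · simp [hγ₀]
  · refine hγ.congr_of_eventuallyEq ?_
    filter_upwards [hγM] with t ht
    exact if_pos ht

theorem apply_eq_zero_of_mem_tangentSet {G : Type*} [NormedAddCommGroup G] [NormedSpace ℝ G]
    {F : EN d → G} {F' : EN d →L[ℝ] G} (hF : HasFDerivAt F F' s)
    (hMF : ∀ᶠ y in 𝓝 s, y ∈ M → F y = 0) (hv : v ∈ TangentSet M s) : F' v = 0 := by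
  obtain ⟨γ, hγM, rfl, hγ⟩ := hv
  have hzero : F ∘ γ =ᶠ[𝓝 0] fun _ => 0 := by
    filter_upwards [hγ.continuousAt.eventually hMF] with t ht
    exact ht (hγM t)
  exact ((hF.comp_hasDerivAt 0 hγ).congr_of_eventuallyEq hzero.symm).unique (hasDerivAt_const 0 0)

theorem mem_tangentSet_of_apply_eq_zero {G : Type*} [NormedAddCommGroup G] [NormedSpace ℝ G]
    [FiniteDimensional ℝ G] {F : EN d → G} {F' : EN d →L[ℝ] G} (hF : HasStrictFDerivAt F F' s)
    (hF' : Function.Surjective F') (hFs : F s = 0) (hMF : ∀ᶠ y in 𝓝 s, F y = 0 → y ∈ M)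
    (hv : F' v = 0) : v ∈ TangentSet M s := by
  have : CompleteSpace G := FiniteDimensional.complete ℝ G
  have hrange : F'.range = ⊤ := LinearMap.range_eq_top.2 hF'
  let g : F'.ker → EN d := hF.implicitFunction F F' hrange (F s)
  let v' : F'.ker := ⟨v, hv⟩
  have hg₀ : g 0 = s := hF.implicitFunction_apply_image hrange
  have hcurve : HasDerivAt (fun t : ℝ => g (t • v')) v 0 := by
    have hline : HasDerivAt (fun t : ℝ => t • v') v' 0 := by
      simpa using (hasDerivAt_id (0 : ℝ)).smul_const v'
    have hg : HasFDerivAt g F'.ker.subtypeL ((0 : ℝ) • v') := by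
      rw [zero_smul]
      exact (hF.to_implicitFunction hrange).hasFDerivAt
    exact hg.comp_hasDerivAt 0 hline
  have hlevel : ∀ᶠ t in 𝓝 (0 : ℝ), F (g (t • v')) = F s := by
    have hlim : Tendsto (fun t : ℝ => (F s, t • v')) (𝓝 0) (𝓝 (F s, 0)) := by
      have hcont : Continuous fun t : ℝ => (F s, t • v') := by fun_prop
      simpa using hcont.tendsto 0
    exact hlim.eventually (hF.map_implicitFunction_eq hrange)
  have hnear : Tendsto (fun t : ℝ => g (t • v')) (𝓝 0) (𝓝 s) := by
    simpa [hg₀] using hcurve.continuousAt.tendsto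
  refine mem_tangentSet_of_eventually (hMF.self_of_nhds hFs) ?_ (by simp [hg₀]) hcurve
  filter_upwards [hnear.eventually hMF, hlevel] with t hMt hFt
  exact hMt (hFt.trans hFs)

theorem IsSubmanifoldDim.exists_submodule_eq_tangentSet {m : ℕ} (hM : IsSubmanifoldDim d m M)
    (hs : s ∈ M) : ∃ V : Submodule ℝ (EN d), (V : Set (EN d)) = TangentSet M s := by
  obtain ⟨U, F, hU, hsU, hF, hMU, hsurj⟩ := hM s hs
  have hmem : ∀ y ∈ U, (y ∈ M ↔ F y = 0) := fun y hy => by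
    simpa [hy] using Set.ext_iff.1 hMU y
  have hMF : ∀ᶠ y in 𝓝 s, (y ∈ M ↔ F y = 0) := (hU.eventually_mem hsU).mono hmem
  have hstrict : HasStrictFDerivAt F (fderiv ℝ F s) s :=
    (hF.contDiffAt (hU.mem_nhds hsU)).hasStrictFDerivAt (by simp)
  refine ⟨(fderiv ℝ F s).ker, Set.ext fun v => ⟨fun hv => ?_, fun hv => ?_⟩⟩
  · exact mem_tangentSet_of_apply_eq_zero hstrict (hsurj s hsU) ((hmem s hsU).1 hs)
      (hMF.mono fun y hy => hy.2) hv
  · exact apply_eq_zero_of_mem_tangentSet hstrict.hasFDerivAt (hMF.mono fun y hy => hy.1) hv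

theorem TangentCols.apply_mem {V : Submodule ℝ (EN d)} (hV : (V : Set (EN d)) = TangentSet M s)
    {ξ : Mat d N} (hξ : TangentCols M s ξ) (x : EN N) : ξ x ∈ V := by
  have hx : ξ x = ∑ i, x i • ξ (EuclideanSpace.single i 1) := by
    conv_lhs => rw [← (EuclideanSpace.basisFun (Fin N) ℝ).sum_repr x]
    simp
  rw [hx]
  refine V.sum_mem fun i _ => V.smul_mem _ ?_
  have hi : ξ (EuclideanSpace.single i 1) ∈ (V : Set (EN d)) := hV ▸ hξ i
  exact hi

end TangentSpace

/-! ### Cubes and grids -/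

section Cubes

open scoped Function Pointwise

variable {N k : ℕ} {t r : ℝ}

theorem posCube_eq_preimage (N : ℕ) (t : ℝ) :
    posCube N t = WithLp.ofLp ⁻¹' (univ.pi fun _ : Fin N => Ioo (0 : ℝ) t) := by
  ext x
  simp [posCube]

theorem isOpen_posCube (N : ℕ) (t : ℝ) : IsOpen (posCube N t) := by
  rw [posCube_eq_preimage]
  exact (isOpen_set_pi finite_univ fun _ _ => isOpen_Ioo).preimage
    (PiLp.continuous_ofLp 2 fun _ : Fin N => ℝ)

theorem measurableSet_posCube (N : ℕ) (t : ℝ) : MeasurableSet (posCube N t) :=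
  (isOpen_posCube N t).measurableSet

theorem convex_posCube (N : ℕ) (t : ℝ) : Convex ℝ (posCube N t) := by
  rw [posCube_eq_preimage]
  exact (convex_pi fun _ _ => convex_Ioo 0 t).linear_preimage
    (WithLp.linearEquiv 2 ℝ (Fin N → ℝ)).toLinearMap

theorem volume_posCube (N : ℕ) (t : ℝ) : volume (posCube N t) = ENNReal.ofReal t ^ N := by
  rw [posCube_eq_preimage, (PiLp.volume_preserving_ofLp (Fin N)).measure_preimage
    (MeasurableSet.univ_pi fun _ => measurableSet_Ioo).nullMeasurableSet, Real.volume_pi_Ioo]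
  simp

theorem volume_posCube_ne_top (N : ℕ) (t : ℝ) : volume (posCube N t) ≠ ∞ := by
  simp [volume_posCube]

theorem volume_real_posCube (N : ℕ) (ht : 0 ≤ t) : volume.real (posCube N t) = t ^ N := by
  simp [measureReal_def, volume_posCube, ht]

theorem posCube_subset_posCube (N : ℕ) (h : r ≤ t) : posCube N r ⊆ posCube N t :=
  fun _ hx i => Ioo_subset_Ioo_right h (hx i)

theorem smul_mem_posCube_mul_iff (hr : 0 < r) {x : EN N} :
    r • x ∈ posCube N (r * t) ↔ x ∈ posCube N t := by
  simp [posCube, hr]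

theorem setIntegral_comp_inv_smul {E : Type*} [NormedAddCommGroup E] [NormedSpace ℝ E]
    (hr : 0 < r) {A B : Set (EN N)} (hAB : ∀ x, r • x ∈ B ↔ x ∈ A) (G : EN N → E) :
    ∫ x in B, G (r⁻¹ • x) = r ^ N • ∫ x in A, G x := by
  have hB : r⁻¹ • B = A := by
    ext x
    rw [mem_smul_set_iff_inv_smul_mem₀ (inv_ne_zero hr.ne'), inv_inv, hAB]
  rw [Measure.setIntegral_comp_smul_of_pos volume G B (inv_pos.2 hr), hB]
  simp

/-- The grid point `t i`, for a multi-index `i ∈ {0, …, k - 1}^N`. -/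
def gridPoint (t : ℝ) (i : Fin N → Fin k) : EN N := WithLp.toLp 2 fun j => t * (i j : ℕ)

/-- The open cell `t i + (0,t)^N` of the grid of mesh `t`. The cells with
`i ∈ {0, …, k - 1}^N` tile `(0, k t)^N` up to a null set. -/
def gridCell (t : ℝ) (i : Fin N → Fin k) : Set (EN N) :=
  (fun x => x - gridPoint t i) ⁻¹' posCube N t

theorem mem_gridCell_iff {i : Fin N → Fin k} {x : EN N} :
    x ∈ gridCell t i ↔ ∀ j, t * (i j : ℕ) < x j ∧ x j < t * ((i j : ℕ) + 1) := by
  simp only [gridCell, gridPoint, posCube, mem_preimage, mem_ofPred_eq, PiLp.sub_apply, mem_Ioo,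
    sub_pos, sub_lt_iff_lt_add, mul_add, mul_one, add_comm]

theorem isOpen_gridCell (t : ℝ) (i : Fin N → Fin k) : IsOpen (gridCell t i) :=
  (isOpen_posCube N t).preimage (continuous_sub_right _)

theorem volume_gridCell (t : ℝ) (i : Fin N → Fin k) :
    volume (gridCell t i) = ENNReal.ofReal t ^ N := by
  rw [gridCell, (measurePreserving_sub_right volume _).measure_preimage
    (measurableSet_posCube N t).nullMeasurableSet, volume_posCube]

theorem smul_mem_gridCell_mul_iff (hr : 0 < r) {i : Fin N → Fin k} {x : EN N} :
    r • x ∈ gridCell (r * t) i ↔ x ∈ gridCell t i := by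
  simp [mem_gridCell_iff, mul_assoc, hr]

theorem pairwise_disjoint_gridCell (t : ℝ) :
    Pairwise (Disjoint on (gridCell t : (Fin N → Fin k) → Set (EN N))) := by
  intro i i' hne
  rw [Function.onFun, Set.disjoint_left]
  intro x hx hx'
  simp only [mem_gridCell_iff] at hx hx'
  obtain ⟨j, hj⟩ := Function.ne_iff.1 hne
  have ht : 0 < t := by nlinarith [hx j]
  have hlt : ((i j : ℕ) : ℝ) < (i' j : ℕ) + 1 :=
    lt_of_mul_lt_mul_left ((hx j).1.trans (hx' j).2) ht.le
  have hlt' : ((i' j : ℕ) : ℝ) < (i j : ℕ) + 1 :=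
    lt_of_mul_lt_mul_left ((hx' j).1.trans (hx j).2) ht.le
  norm_cast at hlt hlt'
  exact hj (Fin.ext (by omega))

theorem gridCell_subset_posCube (t : ℝ) (i : Fin N → Fin k) :
    gridCell t i ⊆ posCube N (k * t) := by
  intro x hx j
  obtain ⟨hlow, hupp⟩ := mem_gridCell_iff.1 hx j
  have ht : 0 < t := by linarith
  have hi : ((i j : ℕ) : ℝ) + 1 ≤ k := by exact_mod_cast (i j).isLt
  exact ⟨lt_of_le_of_lt (by positivity) hlow, hupp.trans_le (by nlinarith)⟩

theorem iUnion_gridCell_ae_eq (N k : ℕ) (t : ℝ) :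
    (⋃ i : Fin N → Fin k, gridCell t i) =ᵐ[volume] posCube N (k * t) := by
  refine ae_eq_of_subset_of_measure_ge (iUnion_subset fun i => gridCell_subset_posCube t i) ?_
    (MeasurableSet.iUnion fun i => (isOpen_gridCell t i).measurableSet).nullMeasurableSet
    (volume_posCube_ne_top N _)
  rw [measure_iUnion (pairwise_disjoint_gridCell t) fun i => (isOpen_gridCell t i).measurableSet]
  simp [volume_gridCell, volume_posCube, ENNReal.ofReal_mul, mul_pow]

theorem setIntegral_posCube_eq_sum_gridCell {E : Type*} [NormedAddCommGroup E] [NormedSpace ℝ E]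
    {G : EN N → E} (hG : IntegrableOn G (posCube N (k * t))) :
    ∫ x in posCube N (k * t), G x = ∑ i : Fin N → Fin k, ∫ x in gridCell t i, G x := by
  rw [← setIntegral_congr_set (iUnion_gridCell_ae_eq N k t)]
  exact integral_iUnion_fintype (fun i => (isOpen_gridCell t i).measurableSet)
    (pairwise_disjoint_gridCell t) fun i => hG.mono_set (gridCell_subset_posCube t i)

theorem setIntegral_gridCell_comp_sub {E : Type*} [NormedAddCommGroup E] [NormedSpace ℝ E]
    (t : ℝ) (i : Fin N → Fin k) (G : EN N → E) :
    ∫ x in gridCell t i, G (x - gridPoint t i) = ∫ x in posCube N t, G x :=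
  (measurePreserving_sub_right volume _).setIntegral_preimage_emb
    (MeasurableEquiv.subRight _).measurableEmbedding G (posCube N t)

end Cubes

/-! ### Periodic integrands and test functions -/

theorem aestronglyMeasurable_comp_of_caratheodory {X Y : Type*} [MeasurableSpace X]
    {μ : Measure X} [TopologicalSpace Y] [TopologicalSpace.MetrizableSpace Y]
    [SecondCountableTopology Y] [MeasurableSpace Y] [OpensMeasurableSpace Y] {f : X → Y → ℝ}
    (hmeas : ∀ y, Measurable fun x => f x y) (hcont : ∀ᵐ x ∂μ, Continuous (f x)) {g : X → Y}
    (hg : Measurable g) : AEStronglyMeasurable (fun x => f x (g x)) μ := by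
  classical
  obtain ⟨S, hS, hSm, hS₀⟩ := exists_measurable_superset_of_null (ae_iff.1 hcont)
  let u : Y → X → ℝ := fun y x => if x ∈ S then 0 else f x y
  have hu : Measurable (Function.uncurry u) := by
    refine measurable_uncurry_of_continuous_of_measurable (fun x => ?_)
      fun y => Measurable.ite hSm measurable_const (hmeas y)
    by_cases hx : x ∈ S
    · simp only [u, hx, if_true, continuous_const]
    · simp only [u, hx, if_false]
      exact not_not.1 fun hc => hx (hS hc)
  refine ⟨fun x => u (g x) x, (hu.comp (hg.prodMk measurable_id)).stronglyMeasurable, ?_⟩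
  filter_upwards [measure_eq_zero_iff_ae_notMem.1 hS₀] with x hx
  exact (if_neg hx).symm

section Integrands

variable {N : ℕ} {F : Type*} [NormedAddCommGroup F] [NormedSpace ℝ F]

/-- A nonnegative Carathéodory integrand that is `1`-periodic in each coordinate direction,
bounded by `β` at the zero matrix and `L`-Lipschitz in the matrix variable. These are the
properties of the standing assumptions that the homogenization arguments rest on. -/
structure IsPeriodicIntegrand (f : EN N → (EN N →L[ℝ] F) → ℝ) (β : ℝ) (L : ℝ≥0) : Prop where
  measurable : ∀ ξ, Measurable fun y => f y ξ
  nonneg : ∀ y ξ, 0 ≤ f y ξ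
  periodic : ∀ y ξ i, f (y + EuclideanSpace.single i 1) ξ = f y ξ
  ae_apply_zero_le : ∀ᵐ y, f y 0 ≤ β
  ae_lipschitzWith : ∀ᵐ y, LipschitzWith L (f y)

theorem StdIntegrand.isPeriodicIntegrand {d : ℕ} {f : EN N → Mat d N → ℝ} {α β L : ℝ}
    (hf : StdIntegrand N d f α β L) : IsPeriodicIntegrand f β L.toNNReal where
  measurable := hf.meas
  nonneg := hf.nonneg
  periodic := hf.periodic
  ae_apply_zero_le := hf.growth.mono fun y hy => by simpa using (hy 0).2
  ae_lipschitzWith := hf.lip.mono fun y hy => LipschitzWith.of_dist_le_mul fun ξ ξ' => by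
    simpa [Real.dist_eq, dist_eq_norm, hf.lip_pos.le] using hy ξ ξ'

namespace IsPeriodicIntegrand

variable {f : EN N → (EN N →L[ℝ] F) → ℝ} {β : ℝ} {L : ℝ≥0}

theorem ae_le_add_norm (hf : IsPeriodicIntegrand f β L) : ∀ᵐ y, ∀ ξ, f y ξ ≤ β + L * ‖ξ‖ := by
  filter_upwards [hf.ae_apply_zero_le, hf.ae_lipschitzWith] with y hy₀ hy ξ
  have hlip := (le_abs_self _).trans (hy.dist_le_mul ξ 0)
  rw [dist_zero_right] at hlip
  linarith

theorem sub_gridPoint (hf : IsPeriodicIntegrand f β L) (n : ℕ) {k : ℕ} (i : Fin N → Fin k)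
    (x : EN N) (ξ : EN N →L[ℝ] F) : f (x - gridPoint n i) ξ = f x ξ := by
  classical
  have hsum : gridPoint n i =
      ∑ j, (n * (i j : ℕ) : ℕ) • (EuclideanSpace.single j 1 : EN N) := by
    ext j
    simp [gridPoint, Pi.single_apply]
  have hper : Function.Periodic (fun y => f y ξ)
      (∑ j, (n * (i j : ℕ) : ℕ) • (EuclideanSpace.single j 1 : EN N)) :=
    Finset.sum_induction _ (Function.Periodic fun y => f y ξ) (fun _ _ => .add_period)
      (fun y => by simp) fun j _ => .nsmul (fun y => hf.periodic y ξ j) _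
  rw [hsum]
  exact hper.sub_eq x

variable [FiniteDimensional ℝ F] {A : Set (EN N)}

theorem integrableOn_comp (hf : IsPeriodicIntegrand f β L) (hA : volume A ≠ ∞)
    {g : EN N → EN N →L[ℝ] F} (hg : Measurable g) {C : ℝ} (hgC : ∀ x, ‖g x‖ ≤ C) :
    IntegrableOn (fun x => f x (g x)) A := by
  have : ProperSpace (EN N →L[ℝ] F) := FiniteDimensional.proper ℝ _
  refine Measure.integrableOn_of_bounded hA (M := β + L * C)
    (aestronglyMeasurable_comp_of_caratheodory hf.measurable
      (hf.ae_lipschitzWith.mono fun _ hy => hy.continuous) hg)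
    (ae_restrict_of_ae (hf.ae_le_add_norm.mono fun x hx => ?_))
  rw [Real.norm_of_nonneg (hf.nonneg x _)]
  exact (hx _).trans (by gcongr; exact hgC x)

theorem integrableOn_add_fderiv (hf : IsPeriodicIntegrand f β L) (hA : volume A ≠ ∞)
    (ξ : EN N →L[ℝ] F) {K : ℝ≥0} {φ : EN N → F} (hφ : LipschitzWith K φ) :
    IntegrableOn (fun x => f x (ξ + fderiv ℝ φ x)) A := by
  have : CompleteSpace F := FiniteDimensional.complete ℝ F
  refine hf.integrableOn_comp hA ((measurable_fderiv ℝ φ).const_add ξ) (C := ‖ξ‖ + K) fun x => ?_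
  exact (norm_add_le _ _).trans (by gcongr; exact norm_fderiv_le_of_lipschitz ℝ hφ)

theorem setIntegral_comp_le_add (hf : IsPeriodicIntegrand f β L)
    (hA : volume A ≠ ∞) {g g' : EN N → EN N →L[ℝ] F} (hg : Measurable g) (hg' : Measurable g')
    {C : ℝ} (hgC : ∀ x, ‖g x‖ ≤ C) (hgC' : ∀ x, ‖g' x‖ ≤ C) :
    ∫ x in A, f x (g x) ≤ (∫ x in A, f x (g' x)) + L * ∫ x in A, ‖g x - g' x‖ := by
  have : ProperSpace (EN N →L[ℝ] F) := FiniteDimensional.proper ℝ _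
  have hdiff : IntegrableOn (fun x => g x - g' x) A :=
    Measure.integrableOn_of_bounded hA (M := C + C) (hg.sub hg').aestronglyMeasurable
      (.of_forall fun x => (norm_sub_le _ _).trans (add_le_add (hgC x) (hgC' x)))
  rw [← integral_const_mul,
    ← integral_add (hf.integrableOn_comp hA hg' hgC') (hdiff.norm.const_mul L)]
  refine integral_mono_ae (hf.integrableOn_comp hA hg hgC)
    ((hf.integrableOn_comp hA hg' hgC').add (hdiff.norm.const_mul L))
    (ae_restrict_of_ae (hf.ae_lipschitzWith.mono fun x hx => ?_))
  have hlip := (le_abs_self _).trans (hx.dist_le_mul (g x) (g' x))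
  rw [dist_eq_norm] at hlip
  simpa only [add_comm] using sub_le_iff_le_add.1 hlip

theorem setIntegral_const_le (hf : IsPeriodicIntegrand f β L)
    (hA : volume A ≠ ∞) (ξ : EN N →L[ℝ] F) : ∫ x in A, f x ξ ≤ volume.real A * (β + L * ‖ξ‖) := by
  rw [← smul_eq_mul, ← setIntegral_const]
  exact integral_mono_ae (hf.integrableOn_comp hA measurable_const fun _ => le_rfl)
    (integrableOn_const hA) (ae_restrict_of_ae (hf.ae_le_add_norm.mono fun x hx => hx ξ))

end IsPeriodicIntegrand

/-- Membership in `W^{1,∞}_0(A; V)`: globally Lipschitz maps with values in `V` that vanish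
outside `A`. -/
structure MemW1InfZero (A : Set (EN N)) (V : Submodule ℝ F) (φ : EN N → F) : Prop where
  exists_lipschitzWith : ∃ K : ℝ≥0, LipschitzWith K φ
  mem : ∀ x, φ x ∈ V
  eq_zero : ∀ x ∉ A, φ x = 0

namespace MemW1InfZero

variable {A B : Set (EN N)} {V : Submodule ℝ F} {φ ψ : EN N → F}

theorem zero : MemW1InfZero A V (0 : EN N → F) :=
  ⟨⟨0, LipschitzWith.const 0⟩, fun _ => V.zero_mem, fun _ _ => rfl⟩

theorem mono (hφ : MemW1InfZero A V φ) (hAB : A ⊆ B) : MemW1InfZero B V φ :=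
  ⟨hφ.exists_lipschitzWith, hφ.mem, fun x hx => hφ.eq_zero x fun hxA => hx (hAB hxA)⟩

theorem add (hφ : MemW1InfZero A V φ) (hψ : MemW1InfZero A V ψ) : MemW1InfZero A V (φ + ψ) := by
  obtain ⟨K, hK⟩ := hφ.exists_lipschitzWith
  obtain ⟨K', hK'⟩ := hψ.exists_lipschitzWith
  exact ⟨⟨K + K', hK.add hK'⟩, fun x => V.add_mem (hφ.mem x) (hψ.mem x),
    fun x hx => by simp [hφ.eq_zero x hx, hψ.eq_zero x hx]⟩

theorem sum {ι : Type*} {s : Finset ι} {ψ : ι → EN N → F}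
    (hψ : ∀ i ∈ s, MemW1InfZero A V (ψ i)) : MemW1InfZero A V (∑ i ∈ s, ψ i) :=
  Finset.sum_induction ψ (MemW1InfZero A V) (fun _ _ => add) zero hψ

theorem comp_sub (hφ : MemW1InfZero A V φ) (p : EN N) :
    MemW1InfZero ((fun x => x - p) ⁻¹' A) V fun x => φ (x - p) := by
  obtain ⟨K, hK⟩ := hφ.exists_lipschitzWith
  exact ⟨⟨_, hK.comp (LipschitzWith.id.sub (LipschitzWith.const p))⟩, fun x => hφ.mem _,
    fun x hx => hφ.eq_zero _ hx⟩

theorem smul_comp_inv_smul (hφ : MemW1InfZero A V φ) {r : ℝ} (hr : r ≠ 0)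
    (hAB : ∀ x, r • x ∈ B ↔ x ∈ A) : MemW1InfZero B V fun x => r • φ (r⁻¹ • x) := by
  obtain ⟨K, hK⟩ := hφ.exists_lipschitzWith
  refine ⟨⟨_, (lipschitzWith_smul r).comp (hK.comp (lipschitzWith_smul r⁻¹))⟩,
    fun x => V.smul_mem _ (hφ.mem _), fun x hx => ?_⟩
  rw [hφ.eq_zero _ fun hA => hx ?_, smul_zero]
  rwa [← hAB, smul_inv_smul₀ hr] at hA

theorem ae_fderiv_eq_zero (hφ : MemW1InfZero A V φ) (hA : volume (frontier A) = 0) :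
    ∀ᵐ x, x ∉ A → fderiv ℝ φ x = 0 := by
  have hsupp : tsupport φ ⊆ closure A :=
    closure_mono fun x hx => not_not.1 fun hxA => hx (hφ.eq_zero x hxA)
  filter_upwards [measure_eq_zero_iff_ae_notMem.1 hA] with x hx hxA
  have hx' : x ∉ closure A := fun h => hx ⟨h, fun hint => hxA (interior_subset hint)⟩
  exact not_not.1 fun h => hx' (hsupp (support_fderiv_subset ℝ h))

end MemW1InfZero

end Integrands

/-! ### Cell problems and the homogenized density -/

section CellProblem

variable {N : ℕ} {F : Type*} [NormedAddCommGroup F] [NormedSpace ℝ F]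

/-- The cell infimum at scale `t`: the least mean energy on `(0,t)^N` of `ξ + ∇φ` over
`φ ∈ W^{1,∞}_0((0,t)^N; V)`. -/
noncomputable def cellInf (f : EN N → (EN N →L[ℝ] F) → ℝ) (V : Submodule ℝ F)
    (ξ : EN N →L[ℝ] F) (t : ℝ) : ℝ :=
  sInf {c | ∃ φ, MemW1InfZero (posCube N t) V φ ∧
    c = (t ^ N)⁻¹ * ∫ x in posCube N t, f x (ξ + fderiv ℝ φ x)}

/-- The density obtained by homogenizing `f` with variations in the subspace `V`; it is
`Tf_hom(s, ·)` for `V = T_s M`. The limit as `t → ∞` is encoded as a `limsup`. -/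
noncomputable def homDensity (f : EN N → (EN N →L[ℝ] F) → ℝ) (V : Submodule ℝ F)
    (ξ : EN N →L[ℝ] F) : ℝ :=
  limsup (cellInf f V ξ) atTop

theorem tanCell_eq_cellInf {d : ℕ} {M : Set (EN d)} {s : EN d} {V : Submodule ℝ (EN d)}
    (hV : (V : Set (EN d)) = TangentSet M s) (f : EN N → Mat d N → ℝ) (ξ : Mat d N) (t : ℝ) :
    tanCell f M s ξ t = cellInf f V ξ t := by
  rw [tanCell, cellInf, ← hV]
  congr 1
  ext c
  constructor
  · rintro ⟨φ, K, hK, hmem, hzero, rfl⟩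
    exact ⟨φ, ⟨⟨K, hK⟩, hmem, hzero⟩, rfl⟩
  · rintro ⟨φ, ⟨⟨K, hK⟩, hmem, hzero⟩, rfl⟩
    exact ⟨φ, K, hK, hmem, hzero, rfl⟩

theorem Tfhom_eq_homDensity {d : ℕ} {M : Set (EN d)} {s : EN d} {V : Submodule ℝ (EN d)}
    (hV : (V : Set (EN d)) = TangentSet M s) (f : EN N → Mat d N → ℝ) (ξ : Mat d N) :
    Tfhom f M s ξ = homDensity f V ξ := by
  simp only [Tfhom, homDensity, tanCell_eq_cellInf hV]

theorem exists_setIntegral_lt_of_cellInf_lt {f : EN N → (EN N →L[ℝ] F) → ℝ} {V : Submodule ℝ F}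
    {ξ : EN N →L[ℝ] F} {t : ℝ} (ht : 0 < t) {c : ℝ}
    (hc : cellInf f V ξ t < c) :
    ∃ φ, MemW1InfZero (posCube N t) V φ ∧
      ∫ x in posCube N t, f x (ξ + fderiv ℝ φ x) < t ^ N * c := by
  obtain ⟨_, ⟨φ, hφ, rfl⟩, hlt⟩ := exists_lt_of_csInf_lt (by exact ⟨_, 0, .zero, rfl⟩) hc
  exact ⟨φ, hφ, (inv_mul_lt_iff₀ (by positivity)).1 hlt⟩

namespace IsPeriodicIntegrand

variable {f : EN N → (EN N →L[ℝ] F) → ℝ} {β : ℝ} {L : ℝ≥0} {V : Submodule ℝ F} {t : ℝ}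

theorem cellInf_nonneg (hf : IsPeriodicIntegrand f β L) (V : Submodule ℝ F) (ξ : EN N →L[ℝ] F)
    (ht : 0 ≤ t) : 0 ≤ cellInf f V ξ t := by
  refine Real.sInf_nonneg ?_
  rintro _ ⟨φ, -, rfl⟩
  exact mul_nonneg (by positivity) (integral_nonneg fun x => hf.nonneg x _)

theorem pow_mul_cellInf_le (hf : IsPeriodicIntegrand f β L) (ht : 0 < t) {φ : EN N → F}
    (hφ : MemW1InfZero (posCube N t) V φ) (ξ : EN N →L[ℝ] F) :
    t ^ N * cellInf f V ξ t ≤ ∫ x in posCube N t, f x (ξ + fderiv ℝ φ x) := by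
  rw [← le_inv_mul_iff₀ (by positivity)]
  refine csInf_le ⟨0, ?_⟩ ⟨φ, hφ, rfl⟩
  rintro _ ⟨ψ, -, rfl⟩
  exact mul_nonneg (by positivity) (integral_nonneg fun x => hf.nonneg x _)

variable [FiniteDimensional ℝ F]

theorem cellInf_le (hf : IsPeriodicIntegrand f β L) (V : Submodule ℝ F) (ξ : EN N →L[ℝ] F)
    (ht : 0 < t) : cellInf f V ξ t ≤ β + L * ‖ξ‖ := by
  have hle := (hf.pow_mul_cellInf_le ht (MemW1InfZero.zero (V := V)) ξ).trans
    (by simpa using hf.setIntegral_const_le (volume_posCube_ne_top N t) ξ)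
  rw [volume_real_posCube N ht.le] at hle
  exact le_of_mul_le_mul_left hle (by positivity)

theorem lipschitzWith_cellInf (hf : IsPeriodicIntegrand f β L) (V : Submodule ℝ F) (ht : 0 < t) :
    LipschitzWith L fun ξ => cellInf f V ξ t := by
  have : CompleteSpace F := FiniteDimensional.complete ℝ F
  refine LipschitzWith.of_le_add_mul L fun ξ ξ' => ?_
  rw [← sub_le_iff_le_add]
  refine le_of_forall_gt_imp_ge_of_dense fun c hc => sub_le_iff_le_add.2 ?_
  obtain ⟨φ, hφ, hlt⟩ := exists_setIntegral_lt_of_cellInf_lt ht hc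
  obtain ⟨K, hK⟩ := hφ.exists_lipschitzWith
  have hmeas (ζ : EN N →L[ℝ] F) : Measurable fun x => ζ + fderiv ℝ φ x :=
    (measurable_fderiv ℝ φ).const_add ζ
  have hbound {ζ : EN N →L[ℝ] F} (hζ : ‖ζ‖ ≤ max ‖ξ‖ ‖ξ'‖) (x : EN N) :
      ‖ζ + fderiv ℝ φ x‖ ≤ max ‖ξ‖ ‖ξ'‖ + K :=
    (norm_add_le _ _).trans (add_le_add hζ (norm_fderiv_le_of_lipschitz ℝ hK))
  refine le_of_mul_le_mul_left ?_ (pow_pos ht N)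
  calc t ^ N * cellInf f V ξ t
      ≤ ∫ x in posCube N t, f x (ξ + fderiv ℝ φ x) := hf.pow_mul_cellInf_le ht hφ ξ
    _ ≤ (∫ x in posCube N t, f x (ξ' + fderiv ℝ φ x)) + L * ∫ _ in posCube N t, ‖ξ - ξ'‖ := by
        simpa only [add_sub_add_right_eq_sub] using hf.setIntegral_comp_le_add
          (volume_posCube_ne_top N t) (hmeas ξ) (hmeas ξ') (hbound (le_max_left _ _))
          (hbound (le_max_right _ _))
    _ ≤ t ^ N * (c + L * dist ξ ξ') := by
        rw [setIntegral_const, volume_real_posCube N ht.le, smul_eq_mul, dist_eq_norm]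
        linear_combination hlt.le

end IsPeriodicIntegrand

end CellProblem

/-! ### Gluing over a grid -/

section Gluing

variable {N k : ℕ} {F : Type*} [NormedAddCommGroup F] [NormedSpace ℝ F]

/-- The map that equals the translate of `ψ i` on the grid cell of index `i`. -/
def gridGlue (t : ℝ) (ψ : (Fin N → Fin k) → EN N → F) : EN N → F :=
  ∑ i, fun x => ψ i (x - gridPoint t i)

variable {t : ℝ} {V : Submodule ℝ F} {ψ : (Fin N → Fin k) → EN N → F}

theorem memW1InfZero_gridGlue (hψ : ∀ i, MemW1InfZero (posCube N t) V (ψ i)) :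
    MemW1InfZero (posCube N (k * t)) V (gridGlue t ψ) :=
  .sum fun i _ => ((hψ i).comp_sub (gridPoint t i)).mono (gridCell_subset_posCube t i)

theorem gridGlue_eventuallyEq (hψ : ∀ i, MemW1InfZero (posCube N t) V (ψ i)) {i : Fin N → Fin k}
    {x : EN N} (hx : x ∈ gridCell t i) :
    gridGlue t ψ =ᶠ[𝓝 x] fun y => ψ i (y - gridPoint t i) := by
  filter_upwards [(isOpen_gridCell t i).mem_nhds hx] with y hy
  rw [gridGlue, Finset.sum_apply]
  refine Fintype.sum_eq_single i fun j hj => (hψ j).eq_zero _ fun hyj => ?_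
  exact (pairwise_disjoint_gridCell t hj).notMem_of_mem_left hyj hy

variable [FiniteDimensional ℝ F]

theorem ae_fderiv_add_gridGlue {Φ : EN N → F} (hΦ : ∀ᵐ x, DifferentiableAt ℝ Φ x)
    (hψ : ∀ i, MemW1InfZero (posCube N t) V (ψ i)) (i : Fin N → Fin k) :
    ∀ᵐ x, x ∈ gridCell t i → fderiv ℝ (Φ + gridGlue t ψ) x =
      fderiv ℝ Φ x + fderiv ℝ (ψ i) (x - gridPoint t i) := by
  obtain ⟨K, hK⟩ := (hψ i).exists_lipschitzWith
  have hψdiff : ∀ᵐ x, DifferentiableAt ℝ (ψ i) (x - gridPoint t i) :=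
    (measurePreserving_sub_right volume (gridPoint t i)).quasiMeasurePreserving.ae
      hK.ae_differentiableAt
  filter_upwards [hΦ, hψdiff] with x hxΦ hxψ hx
  have hsum : Φ + gridGlue t ψ =ᶠ[𝓝 x] Φ + fun y => ψ i (y - gridPoint t i) :=
    (gridGlue_eventuallyEq hψ hx).mono fun y hy => congrArg (Φ y + ·) hy
  rw [hsum.fderiv_eq, fderiv_add hxΦ ((differentiableAt_comp_sub _).2 hxψ),
    fderiv_comp_sub]

namespace IsPeriodicIntegrand

variable {f : EN N → (EN N →L[ℝ] F) → ℝ} {β : ℝ} {L : ℝ≥0} {n : ℕ} {Φ : EN N → F}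

theorem setIntegral_gridCell_glue_le (hf : IsPeriodicIntegrand f β L) {K : ℝ≥0}
    (hΦ : LipschitzWith K Φ) (hψ : ∀ i, MemW1InfZero (posCube N n) V (ψ i))
    (i : Fin N → Fin k) (ξ ζ : EN N →L[ℝ] F) :
    ∫ x in gridCell n i, f x (ξ + fderiv ℝ (Φ + gridGlue n ψ) x) ≤
      (∫ x in posCube N n, f x (ζ + fderiv ℝ (ψ i) x)) +
        L * ∫ x in gridCell n i, ‖ξ + fderiv ℝ Φ x - ζ‖ := by
  have : CompleteSpace F := FiniteDimensional.complete ℝ F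
  obtain ⟨K', hK'⟩ := (hψ i).exists_lipschitzWith
  let D (x : EN N) : EN N →L[ℝ] F := fderiv ℝ (ψ i) (x - gridPoint n i)
  have hD : Measurable D := (measurable_fderiv ℝ (ψ i)).comp (measurable_id.sub_const _)
  have hΦD : Measurable fun x => ξ + fderiv ℝ Φ x + D x :=
    ((measurable_fderiv ℝ Φ).const_add ξ).add hD
  have hDbound (x : EN N) : ‖D x‖ ≤ K' := norm_fderiv_le_of_lipschitz ℝ hK'
  have hΦbound (x : EN N) : ‖fderiv ℝ Φ x‖ ≤ K := norm_fderiv_le_of_lipschitz ℝ hΦ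
  have hglue : ∀ᵐ x, x ∈ gridCell n i →
      f x (ξ + fderiv ℝ (Φ + gridGlue n ψ) x) = f x (ξ + fderiv ℝ Φ x + D x) :=
    (ae_fderiv_add_gridGlue hΦ.ae_differentiableAt hψ i).mono fun x hx hxi => by
      rw [hx hxi, add_assoc]
  have hvol : volume (gridCell (n : ℝ) i) ≠ ∞ := by simp [volume_gridCell]
  have hnorm_left (x : EN N) : ‖ξ + fderiv ℝ Φ x + D x‖ ≤ ‖ξ‖ + ‖ζ‖ + K + K' := by
    linarith [norm_add₃_le (a := ξ) (b := fderiv ℝ Φ x) (c := D x), hDbound x, hΦbound x,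
      norm_nonneg ζ]
  have hnorm_right (x : EN N) : ‖ζ + D x‖ ≤ ‖ξ‖ + ‖ζ‖ + K + K' := by
    linarith [norm_add_le ζ (D x), hDbound x, norm_nonneg ξ, K.coe_nonneg]
  calc ∫ x in gridCell n i, f x (ξ + fderiv ℝ (Φ + gridGlue n ψ) x)
      = ∫ x in gridCell n i, f x (ξ + fderiv ℝ Φ x + D x) :=
        setIntegral_congr_ae (isOpen_gridCell _ i).measurableSet hglue
    _ ≤ (∫ x in gridCell n i, f x (ζ + D x)) +
          L * ∫ x in gridCell n i, ‖ξ + fderiv ℝ Φ x - ζ‖ := by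
        simpa only [add_sub_add_right_eq_sub] using hf.setIntegral_comp_le_add hvol
          hΦD (hD.const_add ζ) hnorm_left hnorm_right
    _ = _ := by
        rw [← setIntegral_gridCell_comp_sub n i fun x => f x (ζ + fderiv ℝ (ψ i) x)]
        simp only [hf.sub_gridPoint, D]

theorem pow_mul_cellInf_le_sum_gridCell (hf : IsPeriodicIntegrand f β L) (hn : 0 < n) (hk : 0 < k)
    (hΦ : MemW1InfZero (posCube N (k * n)) V Φ) (ξ : EN N →L[ℝ] F)
    (ζ : (Fin N → Fin k) → EN N →L[ℝ] F) :
    (k * n : ℝ) ^ N * cellInf f V ξ (k * n) ≤ ∑ i, ((n : ℝ) ^ N * cellInf f V (ζ i) n +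
      L * ∫ x in gridCell n i, ‖ξ + fderiv ℝ Φ x - ζ i‖) := by
  have hn' : (0 : ℝ) < n := by exact_mod_cast hn
  obtain ⟨K, hK⟩ := hΦ.exists_lipschitzWith
  refine le_of_forall_pos_le_add fun ε hε => ?_
  have hδ : 0 < ε / (k * n : ℝ) ^ N := by positivity
  choose ψ hψ hψlt using fun i => exists_setIntegral_lt_of_cellInf_lt (f := f) (V := V) hn'
    (lt_add_of_pos_right (cellInf f V (ζ i) n) hδ)
  have hu : MemW1InfZero (posCube N (k * n)) V (Φ + gridGlue n ψ) :=
    hΦ.add (memW1InfZero_gridGlue hψ)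
  obtain ⟨K', hK'⟩ := hu.exists_lipschitzWith
  calc (k * n : ℝ) ^ N * cellInf f V ξ (k * n)
      ≤ ∫ x in posCube N (k * n), f x (ξ + fderiv ℝ (Φ + gridGlue n ψ) x) :=
        hf.pow_mul_cellInf_le (by positivity) hu ξ
    _ = ∑ i, ∫ x in gridCell n i, f x (ξ + fderiv ℝ (Φ + gridGlue n ψ) x) :=
        setIntegral_posCube_eq_sum_gridCell
          (hf.integrableOn_add_fderiv (volume_posCube_ne_top N _) ξ hK')
    _ ≤ ∑ i, ((n : ℝ) ^ N * (cellInf f V (ζ i) n + ε / (k * n : ℝ) ^ N) +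
          L * ∫ x in gridCell n i, ‖ξ + fderiv ℝ Φ x - ζ i‖) := by
        gcongr with i
        exact (hf.setIntegral_gridCell_glue_le hK hψ i ξ (ζ i)).trans (by gcongr; exact (hψlt i).le)
    _ = _ := by
        simp only [mul_add, Finset.sum_add_distrib, Finset.sum_const, Finset.card_univ,
          Fintype.card_fun, Fintype.card_fin, nsmul_eq_mul, Nat.cast_pow, mul_pow]
        field_simp
        ring

end IsPeriodicIntegrand

end Gluing

/-! ### The homogenized density as a limit -/

section HomogenizedDensity

namespace IsPeriodicIntegrand

variable {N : ℕ} {F : Type*} [NormedAddCommGroup F] [NormedSpace ℝ F] [FiniteDimensional ℝ F]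
  {f : EN N → (EN N →L[ℝ] F) → ℝ} {β : ℝ} {L : ℝ≥0}

theorem cellInf_mul_le (hf : IsPeriodicIntegrand f β L) (V : Submodule ℝ F) (ξ : EN N →L[ℝ] F)
    {k n : ℕ} (hk : 0 < k) (hn : 0 < n) : cellInf f V ξ (k * n) ≤ cellInf f V ξ n := by
  have hglue := hf.pow_mul_cellInf_le_sum_gridCell hn hk (MemW1InfZero.zero (V := V)) ξ fun _ => ξ
  have hsum : (k * n : ℝ) ^ N * cellInf f V ξ (k * n) ≤ (k * n : ℝ) ^ N * cellInf f V ξ n := by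
    simpa [mul_pow, mul_assoc] using hglue
  exact le_of_mul_le_mul_left hsum (by positivity)

theorem cellInf_le_add_of_le (hf : IsPeriodicIntegrand f β L) (V : Submodule ℝ F)
    (ξ : EN N →L[ℝ] F) {r t : ℝ} (hr : 0 < r) (hrt : r ≤ t) :
    cellInf f V ξ t ≤ cellInf f V ξ r + (1 - (r / t) ^ N) * (β + L * ‖ξ‖) := by
  have ht : 0 < t := hr.trans_le hrt
  have hsub : posCube N r ⊆ posCube N t := posCube_subset_posCube N hrt
  rw [← sub_le_iff_le_add]
  refine le_of_forall_gt_imp_ge_of_dense fun c hc => sub_le_iff_le_add.2 ?_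
  have hc₀ : 0 ≤ c := (hf.cellInf_nonneg V ξ hr.le).trans hc.le
  obtain ⟨φ, hφ, hlt⟩ := exists_setIntegral_lt_of_cellInf_lt hr hc
  obtain ⟨K, hK⟩ := hφ.exists_lipschitzWith
  have hlayer : ∫ x in posCube N t \ posCube N r, f x (ξ + fderiv ℝ φ x) ≤
      (t ^ N - r ^ N) * (β + L * ‖ξ‖) := by
    have hae := hφ.ae_fderiv_eq_zero ((convex_posCube N r).addHaar_frontier volume)
    have hfderiv : ∀ᵐ x, x ∈ posCube N t \ posCube N r → f x (ξ + fderiv ℝ φ x) = f x ξ :=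
      hae.mono fun x hx hxr => by rw [hx hxr.2, add_zero]
    rw [setIntegral_congr_ae ((measurableSet_posCube N t).diff (measurableSet_posCube N r)) hfderiv,
      ← volume_real_posCube N hr.le, ← volume_real_posCube N ht.le,
      ← measureReal_sdiff hsub (measurableSet_posCube N r) (volume_posCube_ne_top N t)]
    exact hf.setIntegral_const_le (measure_ne_top_of_subset sdiff_subset
      (volume_posCube_ne_top N t)) ξ
  have hsplit := setIntegral_sdiff (measurableSet_posCube N r)
    (hf.integrableOn_add_fderiv (volume_posCube_ne_top N t) ξ hK) hsub
  have hratio : (r / t) ^ N ≤ 1 := pow_le_one₀ (by positivity) ((div_le_one ht).2 hrt)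
  have hmean : cellInf f V ξ t ≤ (r / t) ^ N * c + (1 - (r / t) ^ N) * (β + L * ‖ξ‖) := by
    refine le_of_mul_le_mul_left ?_ (pow_pos ht N)
    calc t ^ N * cellInf f V ξ t
        ≤ ∫ x in posCube N t, f x (ξ + fderiv ℝ φ x) := hf.pow_mul_cellInf_le ht (hφ.mono hsub) ξ
      _ ≤ r ^ N * c + (t ^ N - r ^ N) * (β + L * ‖ξ‖) := by linarith
      _ = _ := by rw [div_pow]; field_simp
  linarith [mul_le_of_le_one_left hc₀ hratio]

theorem homDensity_le_cellInf (hf : IsPeriodicIntegrand f β L) (V : Submodule ℝ F)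
    (ξ : EN N →L[ℝ] F) {n : ℕ} (hn : 0 < n) : homDensity f V ξ ≤ cellInf f V ξ n := by
  have hn' : (0 : ℝ) < n := by exact_mod_cast hn
  have hratio : Tendsto (fun t : ℝ => ⌊(n : ℝ)⁻¹ * t⌋₊ * n / t) atTop (𝓝 1) := by
    have hfloor := (tendsto_nat_floor_mul_div_atTop (inv_nonneg.2 hn'.le)).mul_const (n : ℝ)
    rw [inv_mul_cancel₀ hn'.ne'] at hfloor
    exact hfloor.congr fun t => div_mul_eq_mul_div _ _ _
  have hlim : Tendsto (fun t : ℝ => cellInf f V ξ n +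
      (1 - (⌊(n : ℝ)⁻¹ * t⌋₊ * n / t) ^ N) * (β + L * ‖ξ‖)) atTop (𝓝 (cellInf f V ξ n)) := by
    simpa using (((hratio.pow N).const_sub 1).mul_const (β + L * ‖ξ‖)).const_add (cellInf f V ξ n)
  have hle : cellInf f V ξ ≤ᶠ[atTop] fun t : ℝ => cellInf f V ξ n +
      (1 - (⌊(n : ℝ)⁻¹ * t⌋₊ * n / t) ^ N) * (β + L * ‖ξ‖) := by
    filter_upwards [eventually_ge_atTop (n : ℝ)] with t ht
    have hpos : 0 < ⌊(n : ℝ)⁻¹ * t⌋₊ :=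
      Nat.floor_pos.2 ((one_le_inv_mul₀ hn').2 ht)
    have hfloor : (⌊(n : ℝ)⁻¹ * t⌋₊ : ℝ) * n ≤ t := by
      rw [← le_div_iff₀ hn', div_eq_inv_mul]
      exact Nat.floor_le (mul_nonneg (inv_nonneg.2 hn'.le) (hn'.le.trans ht))
    exact (hf.cellInf_le_add_of_le V ξ (by positivity) hfloor).trans
      (by gcongr; exact hf.cellInf_mul_le V ξ hpos hn)
  have hcobdd : IsCoboundedUnder (· ≤ ·) atTop (cellInf f V ξ) :=
    isCoboundedUnder_le_of_eventually_le atTop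
      ((eventually_ge_atTop 0).mono fun t ht => hf.cellInf_nonneg V ξ ht)
  exact (limsup_le_limsup hle hcobdd hlim.isBoundedUnder_le).trans_eq hlim.limsup_eq

theorem tendsto_cellInf_natCast (hf : IsPeriodicIntegrand f β L) (V : Submodule ℝ F)
    (ξ : EN N →L[ℝ] F) :
    Tendsto (fun n : ℕ => cellInf f V ξ n) atTop (𝓝 (homDensity f V ξ)) := by
  have hbdd : IsBoundedUnder (· ≤ ·) atTop (cellInf f V ξ) :=
    isBoundedUnder_of_eventually_le
      ((eventually_gt_atTop 0).mono fun t ht => hf.cellInf_le V ξ ht)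
  refine tendsto_order.2 ⟨fun c hc => ?_, fun c hc => ?_⟩
  · filter_upwards [eventually_gt_atTop 0] with n hn
    exact hc.trans_le (hf.homDensity_le_cellInf V ξ hn)
  · exact tendsto_natCast_atTop_atTop.eventually (eventually_lt_of_limsup_lt hc hbdd)

theorem lipschitzWith_homDensity (hf : IsPeriodicIntegrand f β L) (V : Submodule ℝ F) :
    LipschitzWith L (homDensity f V) :=
  (isClosed_setOfPred_lipschitzWith L).mem_of_tendsto
    (tendsto_pi_nhds.2 fun ξ => hf.tendsto_cellInf_natCast V ξ)
    ((eventually_gt_atTop 0).mono fun _ hn => hf.lipschitzWith_cellInf V (Nat.cast_pos.2 hn))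

end IsPeriodicIntegrand

end HomogenizedDensity

/-! ### Step functions on a grid -/

section StepApproximation

variable {N : ℕ}

theorem norm_le_of_mem_posCube {t : ℝ} {x : EN N} (hx : x ∈ posCube N t) : ‖x‖ ≤ √N * |t| := by
  rw [EuclideanSpace.norm_eq, ← Real.sqrt_sq_eq_abs, ← Real.sqrt_mul N.cast_nonneg]
  refine Real.sqrt_le_sqrt ?_
  calc ∑ i, ‖x i‖ ^ 2 ≤ ∑ _i : Fin N, t ^ 2 := by
        refine Finset.sum_le_sum fun i _ => ?_
        rw [Real.norm_of_nonneg (hx i).1.le]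
        exact pow_le_pow_left₀ (hx i).1.le (hx i).2.le 2
    _ = N * t ^ 2 := by simp

theorem exists_norm_sub_gridPoint_le_of_uniformContinuous {G : Type*} [SeminormedAddCommGroup G]
    {g : EN N → G} (hg : UniformContinuous g) {ε : ℝ} (hε : 0 < ε) :
    ∃ k > 0, ∀ i : Fin N → Fin k, ∀ x ∈ gridCell (k : ℝ)⁻¹ i,
      ‖g x - g (gridPoint (k : ℝ)⁻¹ i)‖ ≤ ε := by
  obtain ⟨δ, hδ, hgδ⟩ := Metric.uniformContinuous_iff.1 hg ε hε
  obtain ⟨k, hk⟩ := exists_nat_gt (√N / δ)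
  have hk₀ : (0 : ℝ) < k := (by positivity : 0 ≤ √N / δ).trans_lt hk
  refine ⟨k, Nat.cast_pos.1 hk₀, fun i x hx => ?_⟩
  have hdist : dist x (gridPoint (k : ℝ)⁻¹ i) < δ :=
    calc dist x (gridPoint (k : ℝ)⁻¹ i) ≤ √N * |(k : ℝ)⁻¹| := by
          rw [dist_eq_norm]
          exact norm_le_of_mem_posCube hx
      _ < δ := by rwa [abs_inv, Nat.abs_cast, ← div_eq_mul_inv, div_lt_comm₀ hk₀ hδ]
  rw [← dist_eq_norm]
  exact (hgδ hdist).le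

theorem exists_sum_setIntegral_gridCell_norm_sub_le {G : Type*} [NormedAddCommGroup G]
    [NormedSpace ℝ G] {g : EN N → G} (hg : IntegrableOn g (posCube N 1)) {ε : ℝ} (hε : 0 < ε) :
    ∃ k > 0, ∃ ζ : (Fin N → Fin k) → G,
      ∑ i, ∫ x in gridCell (k : ℝ)⁻¹ i, ‖g x - ζ i‖ ≤ ε := by
  have : (volume.restrict (posCube N 1)).Regular :=
    Measure.Regular.restrict_of_measure_ne_top (volume_posCube_ne_top N 1)
  obtain ⟨g₁, hg₁supp, hg₁le, hg₁cont, hg₁int⟩ :=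
    Integrable.exists_hasCompactSupport_integral_sub_le hg (half_pos hε)
  obtain ⟨k, hk, hosc⟩ := exists_norm_sub_gridPoint_le_of_uniformContinuous
    (hg₁supp.uniformContinuous_of_continuous hg₁cont) (half_pos hε)
  have hk_one : (k : ℝ) * (k : ℝ)⁻¹ = 1 := mul_inv_cancel₀ (Nat.cast_ne_zero.2 hk.ne')
  have hdiff : IntegrableOn (fun x => ‖g x - g₁ x‖) (posCube N 1) := (hg.sub hg₁int).norm
  have hconst : IntegrableOn (fun _ => ε / 2) (posCube N 1) :=
    integrableOn_const (volume_posCube_ne_top N 1)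
  have hbound : IntegrableOn (fun x => ‖g x - g₁ x‖ + ε / 2) (posCube N (k * (k : ℝ)⁻¹)) := by
    rw [hk_one]
    exact hdiff.add hconst
  refine ⟨k, hk, fun i => g₁ (gridPoint (k : ℝ)⁻¹ i), ?_⟩
  calc ∑ i, ∫ x in gridCell (k : ℝ)⁻¹ i, ‖g x - g₁ (gridPoint (k : ℝ)⁻¹ i)‖
      ≤ ∑ i : Fin N → Fin k, ∫ x in gridCell (k : ℝ)⁻¹ i, (‖g x - g₁ x‖ + ε / 2) := by
        refine Finset.sum_le_sum fun i _ => integral_mono_of_nonneg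
          (.of_forall fun x => norm_nonneg _) (hbound.mono_set (gridCell_subset_posCube _ i))
          (ae_restrict_of_forall_mem (isOpen_gridCell _ i).measurableSet fun x hx => ?_)
        exact (norm_sub_le_norm_sub_add_norm_sub _ (g₁ x) _).trans
          (add_le_add_right (hosc i x hx) _)
    _ = (∫ x in posCube N 1, ‖g x - g₁ x‖) + ε / 2 := by
        rw [← setIntegral_posCube_eq_sum_gridCell hbound, hk_one, integral_add hdiff hconst,
          setIntegral_const, volume_real_posCube N zero_le_one, one_pow, one_smul]
    _ ≤ ε := by linarith

end StepApproximation

/-! ### Quasiconvexity -/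

theorem integrableOn_comp_of_continuous_of_norm_le {X E : Type*} [MeasurableSpace X]
    {μ : Measure X} [NormedAddCommGroup E] [ProperSpace E] {H : E → ℝ} (hH : Continuous H)
    {A : Set X} (hA : μ A ≠ ∞) {g : X → E} (hg : AEStronglyMeasurable g μ) {C : ℝ}
    (hgC : ∀ x, ‖g x‖ ≤ C) : IntegrableOn (fun x => H (g x)) A μ := by
  obtain ⟨B, hB⟩ := (isCompact_closedBall (0 : E) C).exists_bound_of_continuousOn hH.continuousOn
  exact Measure.integrableOn_of_bounded hA (hH.comp_aestronglyMeasurable hg)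
    (.of_forall fun x => hB _ (mem_closedBall_zero_iff.2 (hgC x)))

theorem measureReal_mul_le_setIntegral_comp_add {X E : Type*} [MeasurableSpace X]
    {μ : Measure X} [SeminormedAddCommGroup E] {H : E → ℝ} {L : ℝ≥0} (hH : LipschitzWith L H)
    {A : Set X} (hA : μ A ≠ ∞) {g : X → E} (hHg : IntegrableOn (fun x => H (g x)) A μ) {c : E}
    (hgc : IntegrableOn (fun x => ‖g x - c‖) A μ) :
    μ.real A * H c ≤ (∫ x in A, H (g x) ∂μ) + L * ∫ x in A, ‖g x - c‖ ∂μ := by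
  rw [← smul_eq_mul, ← setIntegral_const, ← integral_const_mul,
    ← integral_add hHg (hgc.const_mul L)]
  refine integral_mono (integrableOn_const hA) (hHg.add (hgc.const_mul L)) fun x => ?_
  have hlip := hH.dist_le_mul (g x) c
  rw [dist_eq_norm (g x) c, dist_comm, Real.dist_eq] at hlip
  exact sub_le_iff_le_add'.1 ((le_abs_self _).trans hlip)

section Quasiconvexity

variable {N : ℕ} {F : Type*} [NormedAddCommGroup F] [NormedSpace ℝ F]

/-- Quasiconvexity of a function of matrices with respect to variations with values in the
subspace `V`, tested on the cube `(-1/2,1/2)^N`. -/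
def IsQuasiconvexOn (V : Submodule ℝ F) (H : (EN N →L[ℝ] F) → ℝ) : Prop :=
  ∀ ξ φ, MemW1InfZero (unitCube N) V φ → H ξ ≤ ∫ y in unitCube N, H (ξ + fderiv ℝ φ y)

theorem unitCube_eq_preimage_posCube (N : ℕ) :
    unitCube N = (fun x => x - WithLp.toLp 2 fun _ => -2⁻¹) ⁻¹' posCube N 1 := by
  ext x
  refine forall_congr' fun i => ?_
  simp only [mem_Ioo, PiLp.sub_apply]
  constructor <;> rintro ⟨h₁, h₂⟩ <;> constructor <;> linarith

theorem fderiv_smul_comp_inv_smul (φ : EN N → F) {r : ℝ} (hr : r ≠ 0) (x : EN N) :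
    fderiv ℝ (fun y => r • φ (r⁻¹ • y)) x = fderiv ℝ φ (r⁻¹ • x) := by
  calc fderiv ℝ (fun y => r • φ (r⁻¹ • y)) x
      = r • fderiv ℝ (fun y => φ (r⁻¹ • y)) x :=
        congrFun (fderiv_const_smul_field r) x
    _ = fderiv ℝ φ (r⁻¹ • x) := by rw [fderiv_comp_smul, smul_inv_smul₀ hr]

variable [FiniteDimensional ℝ F] {f : EN N → (EN N →L[ℝ] F) → ℝ} {β : ℝ} {L : ℝ≥0}
  {V : Submodule ℝ F} {φ : EN N → F}

theorem integrableOn_comp_add_fderiv {H : (EN N →L[ℝ] F) → ℝ} (hH : Continuous H)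
    {A : Set (EN N)} (hA : volume A ≠ ∞) (ξ : EN N →L[ℝ] F) {K : ℝ≥0} (hφ : LipschitzWith K φ) :
    IntegrableOn (fun x => H (ξ + fderiv ℝ φ x)) A := by
  have : CompleteSpace F := FiniteDimensional.complete ℝ F
  have : ProperSpace (EN N →L[ℝ] F) := FiniteDimensional.proper ℝ _
  exact integrableOn_comp_of_continuous_of_norm_le hH hA
    ((measurable_fderiv ℝ φ).const_add ξ).aestronglyMeasurable fun x =>
      (norm_add_le _ _).trans (add_le_add_right (norm_fderiv_le_of_lipschitz ℝ hφ) _)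

namespace IsPeriodicIntegrand

theorem cellInf_mul_le_sum_gridCell (hf : IsPeriodicIntegrand f β L)
    (hφ : MemW1InfZero (posCube N 1) V φ) (ξ : EN N →L[ℝ] F) {k n : ℕ} (hk : 0 < k) (hn : 0 < n)
    (ζ : (Fin N → Fin k) → EN N →L[ℝ] F) :
    cellInf f V ξ (k * n) ≤ ∑ i, (((k : ℝ)⁻¹) ^ N * cellInf f V (ζ i) n +
      L * ∫ x in gridCell (k : ℝ)⁻¹ i, ‖ξ + fderiv ℝ φ x - ζ i‖) := by
  have hr : (0 : ℝ) < k * n := by positivity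
  have hside : (k * n : ℝ) * (k : ℝ)⁻¹ = n := by field_simp
  have hΦ : MemW1InfZero (posCube N (k * n)) V fun x => (k * n : ℝ) • φ ((k * n : ℝ)⁻¹ • x) :=
    hφ.smul_comp_inv_smul hr.ne' fun x => by
      rw [← smul_mem_posCube_mul_iff hr (t := 1), mul_one]
  have hscale (i : Fin N → Fin k) :
      ∫ x in gridCell n i, ‖ξ + fderiv ℝ φ ((k * n : ℝ)⁻¹ • x) - ζ i‖ =
        (k * n : ℝ) ^ N * ∫ x in gridCell (k : ℝ)⁻¹ i, ‖ξ + fderiv ℝ φ x - ζ i‖ :=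
    setIntegral_comp_inv_smul hr
      (fun x => by rw [← smul_mem_gridCell_mul_iff hr (t := (k : ℝ)⁻¹), hside])
      fun x => ‖ξ + fderiv ℝ φ x - ζ i‖
  have hglue := hf.pow_mul_cellInf_le_sum_gridCell hn hk hΦ ξ ζ
  simp only [fderiv_smul_comp_inv_smul φ hr.ne', hscale] at hglue
  refine le_of_mul_le_mul_left (hglue.trans_eq ?_) (pow_pos hr N)
  rw [Finset.mul_sum]
  refine Finset.sum_congr rfl fun i _ => ?_
  rw [mul_add, ← mul_assoc (_ ^ N), ← mul_pow, hside, mul_left_comm (L : ℝ)]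

theorem homDensity_le_setIntegral_cellInf_add (hf : IsPeriodicIntegrand f β L)
    (hφ : MemW1InfZero (posCube N 1) V φ) (ξ : EN N →L[ℝ] F) {k n : ℕ} (hk : 0 < k) (hn : 0 < n)
    (ζ : (Fin N → Fin k) → EN N →L[ℝ] F) :
    homDensity f V ξ ≤ (∫ x in posCube N 1, cellInf f V (ξ + fderiv ℝ φ x) n) +
      2 * L * ∑ i, ∫ x in gridCell (k : ℝ)⁻¹ i, ‖ξ + fderiv ℝ φ x - ζ i‖ := by
  obtain ⟨K, hK⟩ := hφ.exists_lipschitzWith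
  have hk_one : (k : ℝ) * (k : ℝ)⁻¹ = 1 := mul_inv_cancel₀ (Nat.cast_ne_zero.2 hk.ne')
  have hlip := hf.lipschitzWith_cellInf V (Nat.cast_pos.2 hn)
  have hvol (i : Fin N → Fin k) : volume (gridCell (k : ℝ)⁻¹ i) ≠ ∞ := by simp [volume_gridCell]
  have hcell (i : Fin N → Fin k) : ((k : ℝ)⁻¹) ^ N * cellInf f V (ζ i) n ≤
      (∫ x in gridCell (k : ℝ)⁻¹ i, cellInf f V (ξ + fderiv ℝ φ x) n) +
        L * ∫ x in gridCell (k : ℝ)⁻¹ i, ‖ξ + fderiv ℝ φ x - ζ i‖ := by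
    have hdist : Continuous fun η : EN N →L[ℝ] F => ‖η - ζ i‖ := by fun_prop
    have hmean := measureReal_mul_le_setIntegral_comp_add hlip (hvol i)
      (integrableOn_comp_add_fderiv hlip.continuous (hvol i) ξ hK)
      (integrableOn_comp_add_fderiv hdist (hvol i) ξ hK)
    rwa [measureReal_def, volume_gridCell, ENNReal.toReal_pow,
      ENNReal.toReal_ofReal (by positivity)] at hmean
  calc homDensity f V ξ ≤ cellInf f V ξ (k * n) := by
        exact_mod_cast hf.homDensity_le_cellInf V ξ (Nat.mul_pos hk hn)
    _ ≤ ∑ i, (((k : ℝ)⁻¹) ^ N * cellInf f V (ζ i) n +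
          L * ∫ x in gridCell (k : ℝ)⁻¹ i, ‖ξ + fderiv ℝ φ x - ζ i‖) :=
        hf.cellInf_mul_le_sum_gridCell hφ ξ hk hn ζ
    _ ≤ ∑ i, ((∫ x in gridCell (k : ℝ)⁻¹ i, cellInf f V (ξ + fderiv ℝ φ x) n) +
          2 * L * ∫ x in gridCell (k : ℝ)⁻¹ i, ‖ξ + fderiv ℝ φ x - ζ i‖) :=
        Finset.sum_le_sum fun i _ => by linarith [hcell i]
    _ = _ := by
        rw [Finset.sum_add_distrib, ← Finset.mul_sum, ← setIntegral_posCube_eq_sum_gridCell, hk_one]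
        exact integrableOn_comp_add_fderiv hlip.continuous (volume_posCube_ne_top N _) ξ hK

theorem homDensity_le_setIntegral_cellInf (hf : IsPeriodicIntegrand f β L)
    (hφ : MemW1InfZero (posCube N 1) V φ) (ξ : EN N →L[ℝ] F) {n : ℕ} (hn : 0 < n) :
    homDensity f V ξ ≤ ∫ x in posCube N 1, cellInf f V (ξ + fderiv ℝ φ x) n := by
  have : CompleteSpace F := FiniteDimensional.complete ℝ F
  obtain ⟨K, hK⟩ := hφ.exists_lipschitzWith
  have hint : IntegrableOn (fun x => ξ + fderiv ℝ φ x) (posCube N 1) :=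
    Measure.integrableOn_of_bounded (M := ‖ξ‖ + K) (volume_posCube_ne_top N 1)
      ((measurable_fderiv ℝ φ).const_add ξ).aestronglyMeasurable
      (.of_forall fun x => (norm_add_le _ _).trans
        (by gcongr; exact norm_fderiv_le_of_lipschitz ℝ hK))
  refine le_of_forall_pos_le_add fun ε hε => ?_
  obtain ⟨k, hk, ζ, hζ⟩ := exists_sum_setIntegral_gridCell_norm_sub_le hint
    (show 0 < ε / (2 * L + 1) by positivity)
  refine (hf.homDensity_le_setIntegral_cellInf_add hφ ξ hk hn ζ).trans ?_
  gcongr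
  calc 2 * L * _ ≤ (2 * L + 1) * (ε / (2 * L + 1)) := by
        gcongr
        exact le_add_of_nonneg_right zero_le_one
    _ = ε := by field_simp

theorem homDensity_le_setIntegral_posCube (hf : IsPeriodicIntegrand f β L)
    (hφ : MemW1InfZero (posCube N 1) V φ) (ξ : EN N →L[ℝ] F) :
    homDensity f V ξ ≤ ∫ x in posCube N 1, homDensity f V (ξ + fderiv ℝ φ x) := by
  have : CompleteSpace F := FiniteDimensional.complete ℝ F
  have : ProperSpace (EN N →L[ℝ] F) := FiniteDimensional.proper ℝ _
  obtain ⟨K, hK⟩ := hφ.exists_lipschitzWith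
  have hD : Measurable fun x => ξ + fderiv ℝ φ x := (measurable_fderiv ℝ φ).const_add ξ
  have hDbound (x : EN N) : ‖ξ + fderiv ℝ φ x‖ ≤ ‖ξ‖ + K :=
    (norm_add_le _ _).trans (by gcongr; exact norm_fderiv_le_of_lipschitz ℝ hK)
  have hlim : Tendsto (fun n : ℕ => ∫ x in posCube N 1, cellInf f V (ξ + fderiv ℝ φ x) n) atTop
      (𝓝 (∫ x in posCube N 1, homDensity f V (ξ + fderiv ℝ φ x))) := by
    refine tendsto_integral_filter_of_dominated_convergence (fun _ => β + L * (‖ξ‖ + K)) ?_ ?_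
      (integrableOn_const (volume_posCube_ne_top N 1))
      (.of_forall fun x => hf.tendsto_cellInf_natCast V _)
    all_goals filter_upwards [eventually_gt_atTop 0] with n hn
    · exact (hf.lipschitzWith_cellInf V (Nat.cast_pos.2 hn)).continuous.comp_aestronglyMeasurable
        hD.aestronglyMeasurable
    · refine .of_forall fun x => ?_
      rw [Real.norm_of_nonneg (hf.cellInf_nonneg V _ n.cast_nonneg)]
      exact (hf.cellInf_le V _ (Nat.cast_pos.2 hn)).trans (by gcongr; exact hDbound x)
  exact ge_of_tendsto hlim ((eventually_gt_atTop 0).mono fun n hn =>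
    hf.homDensity_le_setIntegral_cellInf hφ ξ hn)

theorem isQuasiconvexOn_homDensity (hf : IsPeriodicIntegrand f β L) (V : Submodule ℝ F) :
    IsQuasiconvexOn V (homDensity f V) := by
  intro ξ φ hφ
  let p : EN N := WithLp.toLp 2 fun _ => -2⁻¹
  have hcube : unitCube N = (fun x => x - p) ⁻¹' posCube N 1 := unitCube_eq_preimage_posCube N
  have hshift : (fun x => x - -p) ⁻¹' unitCube N = posCube N 1 := by
    ext x
    simp [hcube]
  have hφ' : MemW1InfZero (posCube N 1) V fun x => φ (x - -p) := hshift ▸ hφ.comp_sub (-p)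
  calc homDensity f V ξ
      ≤ ∫ x in posCube N 1, homDensity f V (ξ + fderiv ℝ (fun y => φ (y - -p)) x) :=
        hf.homDensity_le_setIntegral_posCube hφ' ξ
    _ = ∫ x in (fun x => x - -p) ⁻¹' unitCube N, homDensity f V (ξ + fderiv ℝ φ (x - -p)) := by
        simp only [fderiv_comp_sub, hshift]
    _ = ∫ y in unitCube N, homDensity f V (ξ + fderiv ℝ φ y) :=
        (measurePreserving_sub_right volume (-p)).setIntegral_preimage_emb
          (Homeomorph.subRight (-p)).measurableEmbedding
          (fun y => homDensity f V (ξ + fderiv ℝ φ y)) _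

end IsPeriodicIntegrand

end Quasiconvexity

/-! ### Laminates -/

section UnitCube

variable (N : ℕ)

theorem isOpen_unitCube : IsOpen (unitCube N) := by
  rw [unitCube_eq_preimage_posCube]
  exact (isOpen_posCube N 1).preimage (continuous_id.sub continuous_const)

theorem volume_unitCube : volume (unitCube N) = 1 := by
  rw [unitCube_eq_preimage_posCube, (measurePreserving_sub_right volume _).measure_preimage
    (isOpen_posCube N 1).nullMeasurableSet, volume_posCube, ENNReal.ofReal_one, one_pow]

theorem nonempty_compl_unitCube [Nontrivial (EN N)] : (unitCube N)ᶜ.Nonempty := by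
  obtain ⟨w, hw⟩ := exists_ne (0 : EN N)
  obtain ⟨i, -⟩ : ∃ i, w i ≠ 0 := by
    contrapose! hw
    exact PiLp.ext hw
  refine ⟨EuclideanSpace.single i 1, fun h => ?_⟩
  have hlt := (h i).2
  norm_num at hlt

theorem tendsto_measureReal_unitCube_cthickening_compl :
    Tendsto (fun δ => (volume.restrict (unitCube N)).real (Metric.cthickening δ (unitCube N)ᶜ))
      (𝓝 0) (𝓝 0) := by
  have hfin : volume.restrict (unitCube N) univ ≠ ∞ := by simp [volume_unitCube]
  have hlim := tendsto_measure_cthickening_of_isClosed (μ := volume.restrict (unitCube N))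
    ⟨1, one_pos, measure_ne_top_of_subset (subset_univ _) hfin⟩ (isOpen_unitCube N).isClosed_compl
  rw [Measure.restrict_apply (isOpen_unitCube N).measurableSet.compl, compl_inter_self,
    measure_empty] at hlim
  exact (ENNReal.tendsto_toReal ENNReal.zero_ne_top).comp hlim

end UnitCube

theorem exists_setIntegral_comp_add_le {X : Type*} [MeasurableSpace X] {μ : Measure X}
    [SFinite μ] {A : Set X} (hA : μ A ≠ ∞) {l : X → ℝ} (hl : Measurable l) {u : ℝ → ℝ}
    (hu : Function.Periodic u 1) (hum : Measurable u) {C : ℝ} (huC : ∀ r, ‖u r‖ ≤ C) :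
    ∃ τ, ∫ y in A, u (l y + τ) ∂μ ≤ μ.real A * ∫ r in (0 : ℝ)..1, u r := by
  have : IsFiniteMeasure (μ.restrict A) := isFiniteMeasure_restrict.2 hA
  have : IsProbabilityMeasure (volume.restrict (Ioc (0 : ℝ) 1)) := ⟨by simp⟩
  have hint : Integrable (Function.uncurry fun τ y => u (l y + τ))
      ((volume.restrict (Ioc (0 : ℝ) 1)).prod (μ.restrict A)) :=
    .of_bound (hum.comp ((hl.comp measurable_snd).add measurable_fst)).aestronglyMeasurable C
      (.of_forall fun _ => huC _)
  have hmean (y : X) : ∫ τ in Ioc (0 : ℝ) 1, u (l y + τ) = ∫ r in (0 : ℝ)..1, u r := by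
    rw [← intervalIntegral.integral_of_le zero_le_one, intervalIntegral.integral_comp_add_left,
      add_zero, hu.intervalIntegral_add_eq (l y) 0, zero_add]
  obtain ⟨τ, hτ⟩ := exists_le_integral hint.integral_prod_left
  refine ⟨τ, hτ.trans_eq ((integral_integral_swap hint).trans ?_)⟩
  simp only [hmean, setIntegral_const, smul_eq_mul]

section Laminate

variable {N : ℕ} {F : Type*} [NormedAddCommGroup F] [NormedSpace ℝ F]
  {A : Set (EN N)} {V : Submodule ℝ F} {q : ℝ → ℝ} {K : ℝ≥0} {w : EN N} {a : F}

/-- The map oscillating in direction `w` with scalar profile `q` and amplitude `a`, cut off at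
the boundary of `A` by the distance to the complement of `A`. -/
noncomputable def laminate (A : Set (EN N)) (q : ℝ → ℝ) (w : EN N) (a : F) (x : EN N) : F :=
  min (q ⟪w, x⟫) (Metric.infDist x Aᶜ) • a

theorem lipschitzWith_laminate (hq : LipschitzWith K q) (A : Set (EN N)) (w : EN N) (a : F) :
    LipschitzWith (‖a‖₊ * max (K * ‖w‖₊) 1) (laminate A q w a) := by
  have hinner : LipschitzWith ‖w‖₊ fun x : EN N => ⟪w, x⟫ := by
    have hnorm : ‖innerSL ℝ w‖₊ = ‖w‖₊ := NNReal.eq (innerSL_apply_norm ℝ w)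
    exact hnorm ▸ (innerSL ℝ w).lipschitz
  have hsmul : LipschitzWith ‖a‖₊ fun r : ℝ => r • a := .of_dist_le_mul fun r t => by
    rw [dist_eq_norm, dist_eq_norm, ← sub_smul, norm_smul, mul_comm, coe_nnnorm]
  exact hsmul.comp ((hq.comp hinner).min (Metric.lipschitz_infDist_pt Aᶜ))

theorem memW1InfZero_laminate (hq : LipschitzWith K q) (hq₀ : ∀ r, 0 ≤ q r) (A : Set (EN N))
    (w : EN N) (ha : a ∈ V) : MemW1InfZero A V (laminate A q w a) :=
  ⟨⟨_, lipschitzWith_laminate hq A w a⟩, fun _ => V.smul_mem _ ha, fun x hx => by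
    rw [laminate, Metric.infDist_zero_of_mem (mem_compl hx), min_eq_right (hq₀ _), zero_smul]⟩

theorem laminate_eventuallyEq {δ : ℝ} (hqδ : ∀ r, q r ≤ δ) (hA : Aᶜ.Nonempty) {x : EN N}
    (hx : x ∉ Metric.cthickening δ Aᶜ) : laminate A q w a =ᶠ[𝓝 x] fun y => q ⟪w, y⟫ • a := by
  filter_upwards [Metric.isClosed_cthickening.isOpen_compl.mem_nhds hx] with y hy
  rw [laminate, min_eq_left ((hqδ _).trans (le_of_not_ge fun hle => hy ?_))]
  rw [Metric.mem_cthickening_iff, ← ENNReal.ofReal_toReal (Metric.infEDist_ne_top hA)]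
  exact ENNReal.ofReal_le_ofReal hle

theorem ae_fderiv_laminate (hq : LipschitzWith K q) {δ : ℝ} (hqδ : ∀ r, q r ≤ δ)
    (hA : Aᶜ.Nonempty) (hw : w ≠ 0) (a : F) :
    ∀ᵐ x, x ∉ Metric.cthickening δ Aᶜ →
      fderiv ℝ (laminate A q w a) x = deriv q ⟪w, x⟫ • (innerSL ℝ w).smulRight a := by
  have hsurj : Function.Surjective (innerSL ℝ w : EN N →ₗ[ℝ] ℝ) :=
    LinearMap.surjective fun h => hw (inner_self_eq_zero.1 (DFunLike.congr_fun h w))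
  have hdiff : ∀ᵐ x : EN N, DifferentiableAt ℝ q ⟪w, x⟫ :=
    (ae_comp_linearMap_mem_iff _ volume volume hsurj (measurableSet_of_differentiableAt ℝ q)).2
      hq.ae_differentiableAt
  filter_upwards [hdiff] with x hqx hx
  have hderiv : HasFDerivAt (fun y => q ⟪w, y⟫ • a)
      ((deriv q ⟪w, x⟫ • innerSL ℝ w).smulRight a) x :=
    (hqx.hasDerivAt.comp_hasFDerivAt x (innerSL ℝ w).hasFDerivAt).smul_const a
  rw [(laminate_eventuallyEq hqδ hA hx).fderiv_eq, hderiv.fderiv]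
  ext v
  simp [mul_smul]

theorem norm_fderiv_laminate_le (hq : LipschitzWith K q) (A : Set (EN N)) (w : EN N) (a : F)
    (x : EN N) : ‖fderiv ℝ (laminate A q w a) x‖ ≤ ‖a‖ * max (K * ‖w‖) 1 := by
  simpa only [NNReal.coe_mul, NNReal.coe_max, coe_nnnorm, NNReal.coe_one] using
    norm_fderiv_le_of_lipschitz ℝ (lipschitzWith_laminate hq A w a) (x₀ := x)

theorem norm_deriv_smul_smulRight_le (hq : LipschitzWith K q) (w : EN N) (a : F) (r : ℝ) :
    ‖deriv q r • (innerSL ℝ w).smulRight a‖ ≤ ‖a‖ * max (K * ‖w‖) 1 := by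
  rw [norm_smul, ContinuousLinearMap.norm_smulRight_apply, innerSL_apply_norm, ← mul_assoc,
    mul_comm _ ‖a‖]
  gcongr
  refine le_max_of_le_left ?_
  gcongr
  exact norm_deriv_le_of_lipschitz hq

variable [FiniteDimensional ℝ F] {H : (EN N →L[ℝ] F) → ℝ}

theorem setIntegral_comp_add_fderiv_laminate_le (hH : Continuous H) (hq : LipschitzWith K q)
    {δ : ℝ} (hqδ : ∀ r, q r ≤ δ) (hA : volume A ≠ ∞) (hAc : Aᶜ.Nonempty) (hw : w ≠ 0) (a : F)
    (ξ : EN N →L[ℝ] F) {B : ℝ} (hB : ∀ η, ‖η‖ ≤ ‖ξ‖ + ‖a‖ * max (K * ‖w‖) 1 → |H η| ≤ B) :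
    ∫ x in A, H (ξ + fderiv ℝ (laminate A q w a) x) ≤
      (∫ x in A, H (ξ + deriv q ⟪w, x⟫ • (innerSL ℝ w).smulRight a)) +
        (volume.restrict A).real (Metric.cthickening δ Aᶜ) * (2 * B) := by
  have hlayer : MeasurableSet (Metric.cthickening δ Aᶜ) :=
    Metric.isClosed_cthickening.measurableSet
  have hcomp : Continuous fun c : ℝ => H (ξ + c • (innerSL ℝ w).smulRight a) :=
    hH.comp (by fun_prop)
  have hint : IntegrableOn (fun x => H (ξ + deriv q ⟪w, x⟫ • (innerSL ℝ w).smulRight a)) A :=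
    integrableOn_comp_of_continuous_of_norm_le hcomp hA
      ((measurable_deriv q).comp (innerSL ℝ w).measurable).aestronglyMeasurable
      fun _ => norm_deriv_le_of_lipschitz hq
  have hind : IntegrableOn ((Metric.cthickening δ Aᶜ).indicator fun _ => 2 * B) A :=
    (integrableOn_const hA).indicator hlayer
  rw [← smul_eq_mul, ← integral_indicator_const _ hlayer, ← integral_add hint hind]
  refine integral_mono_ae (integrableOn_comp_add_fderiv hH hA ξ
    (lipschitzWith_laminate hq A w a)) (hint.add hind) ?_
  filter_upwards [ae_restrict_of_ae (ae_fderiv_laminate hq hqδ hAc hw a)] with x hx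
  by_cases hmem : x ∈ Metric.cthickening δ Aᶜ
  · have hleft := hB _ ((norm_add_le ξ _).trans (add_le_add_right
      (norm_fderiv_laminate_le hq A w a x) _))
    have hright := hB _ ((norm_add_le ξ _).trans (add_le_add_right
      (norm_deriv_smul_smulRight_le hq w a ⟪w, x⟫) _))
    rw [indicator_of_mem hmem]
    linarith [le_of_abs_le hleft, neg_le_of_abs_le hright]
  · rw [hx hmem, indicator_of_notMem hmem, add_zero]

end Laminate

/-! ### Rank-one convexity -/

section Rescaling

variable {p : ℝ → ℝ} {K : ℝ≥0} {k : ℝ}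

theorem lipschitzWith_inv_mul_comp_mul_add (hp : LipschitzWith K p) (hk : 0 < k) (τ : ℝ) :
    LipschitzWith K fun t => k⁻¹ * p (k * t + τ) := .of_dist_le_mul fun r t => by
  rw [Real.dist_eq, ← mul_sub, abs_mul, abs_of_pos (inv_pos.2 hk), inv_mul_le_iff₀ hk]
  simpa [Real.dist_eq, ← mul_sub, abs_mul, abs_of_pos hk, mul_left_comm] using
    hp.dist_le_mul (k * r + τ) (k * t + τ)

theorem deriv_inv_mul_comp_mul_add (p : ℝ → ℝ) (hk : k ≠ 0) (τ r : ℝ) :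
    deriv (fun t => k⁻¹ * p (k * t + τ)) r = deriv p (k * r + τ) := by
  rw [deriv_const_mul_field, deriv_comp_mul_left k (fun t => p (t + τ)), deriv_comp_add_const,
    smul_eq_mul, inv_mul_cancel_left₀ hk]

end Rescaling

namespace IsQuasiconvexOn

variable {N : ℕ} {F : Type*} [NormedAddCommGroup F] [NormedSpace ℝ F] [FiniteDimensional ℝ F]
  {V : Submodule ℝ F} {H : (EN N →L[ℝ] F) → ℝ} {p : ℝ → ℝ} {K : ℝ≥0} {C : ℝ} {a : F} {w : EN N}

theorem le_setIntegral_deriv_add (h : IsQuasiconvexOn V H) (hH : Continuous H)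
    (hp : LipschitzWith K p) (hp₀ : ∀ r, 0 ≤ p r) (hpC : ∀ r, p r ≤ C) (ha : a ∈ V) (hw : w ≠ 0)
    (ξ : EN N →L[ℝ] F) {B : ℝ} (hB : ∀ η, ‖η‖ ≤ ‖ξ‖ + ‖a‖ * max (K * ‖w‖) 1 → |H η| ≤ B) :
    H ξ ≤ (∫ x in unitCube N, H (ξ + deriv p ⟪w, x⟫ • (innerSL ℝ w).smulRight a)) +
      (volume.restrict (unitCube N)).real (Metric.cthickening C (unitCube N)ᶜ) * (2 * B) := by
  have : Nontrivial (EN N) := nontrivial_of_ne w 0 hw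
  have hvol : volume (unitCube N) ≠ ∞ := by simp [volume_unitCube]
  exact (h ξ _ (memW1InfZero_laminate hp hp₀ _ w ha)).trans
    (setIntegral_comp_add_fderiv_laminate_le hH hp hpC hvol (nonempty_compl_unitCube N) hw a ξ hB)

theorem le_intervalIntegral_deriv_add (h : IsQuasiconvexOn V H) (hH : Continuous H)
    (hp : LipschitzWith K p) (hper : Function.Periodic p 1) (hp₀ : ∀ r, 0 ≤ p r)
    (hpC : ∀ r, p r ≤ C) (ha : a ∈ V) (hw : w ≠ 0) (ξ : EN N →L[ℝ] F) {B : ℝ}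
    (hB : ∀ η, ‖η‖ ≤ ‖ξ‖ + ‖a‖ * max (K * ‖w‖) 1 → |H η| ≤ B) {k : ℝ} (hk : 0 < k) :
    H ξ ≤ (∫ r in (0 : ℝ)..1, H (ξ + deriv p r • (innerSL ℝ w).smulRight a)) +
      (volume.restrict (unitCube N)).real (Metric.cthickening (k⁻¹ * C) (unitCube N)ᶜ) *
        (2 * B) := by
  set u : ℝ → ℝ := fun r => H (ξ + deriv p r • (innerSL ℝ w).smulRight a) with hu
  have huper : Function.Periodic u 1 := fun r => by
    simp only [hu, ← deriv_comp_add_const, hper _]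
  have hcomp : Continuous fun c : ℝ => H (ξ + c • (innerSL ℝ w).smulRight a) :=
    hH.comp (by fun_prop)
  have huB (r : ℝ) : ‖u r‖ ≤ B := hB _ ((norm_add_le ξ _).trans
    (add_le_add_right (norm_deriv_smul_smulRight_le hp w a r) _))
  obtain ⟨τ, hτ⟩ := exists_setIntegral_comp_add_le (μ := volume) (A := unitCube N)
    (by simp [volume_unitCube]) ((innerSL ℝ w).measurable.const_mul k) huper
    (hcomp.measurable.comp (measurable_deriv p)) huB
  rw [measureReal_def, volume_unitCube, ENNReal.toReal_one, one_mul] at hτ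
  have hlam := h.le_setIntegral_deriv_add hH (lipschitzWith_inv_mul_comp_mul_add hp hk τ)
    (fun r => mul_nonneg (inv_nonneg.2 hk.le) (hp₀ _))
    (fun r => mul_le_mul_of_nonneg_left (hpC _) (inv_nonneg.2 hk.le)) ha hw ξ hB
  simp only [deriv_inv_mul_comp_mul_add p hk.ne'] at hlam
  exact hlam.trans (add_le_add_left hτ _)

theorem le_intervalIntegral_deriv (h : IsQuasiconvexOn V H) (hH : Continuous H)
    (hp : LipschitzWith K p) (hper : Function.Periodic p 1) (hp₀ : ∀ r, 0 ≤ p r)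
    (hpC : ∀ r, p r ≤ C) (ha : a ∈ V) (hw : w ≠ 0) (ξ : EN N →L[ℝ] F) :
    H ξ ≤ ∫ r in (0 : ℝ)..1, H (ξ + deriv p r • (innerSL ℝ w).smulRight a) := by
  have : CompleteSpace F := FiniteDimensional.complete ℝ F
  have : ProperSpace (EN N →L[ℝ] F) := FiniteDimensional.proper ℝ _
  obtain ⟨B, hB⟩ := (isCompact_closedBall (0 : EN N →L[ℝ] F)
    (‖ξ‖ + ‖a‖ * max (K * ‖w‖) 1)).exists_bound_of_continuousOn hH.continuousOn
  have hδ : Tendsto (fun k : ℝ => k⁻¹ * C) atTop (𝓝 0) := by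
    simpa only [zero_mul] using tendsto_inv_atTop_zero.mul_const C
  have hlim := (((tendsto_measureReal_unitCube_cthickening_compl N).comp hδ).mul_const
    (2 * B)).const_add (∫ r in (0 : ℝ)..1, H (ξ + deriv p r • (innerSL ℝ w).smulRight a))
  rw [zero_mul, add_zero] at hlim
  exact ge_of_tendsto hlim ((eventually_gt_atTop 0).mono fun k hk =>
    h.le_intervalIntegral_deriv_add hH hp hper hp₀ hpC ha hw ξ
      (fun η hη => hB η (mem_closedBall_zero_iff.2 hη)) hk)

end IsQuasiconvexOn

section Sawtooth

variable {θ : ℝ}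

/-- The `1`-periodic sawtooth with slope `1 - θ` on `(0,θ)` and slope `-θ` on `(θ,1)`. -/
noncomputable def sawtooth (θ r : ℝ) : ℝ :=
  min ((1 - θ) * Int.fract r) (θ * (1 - Int.fract r))

theorem sawtooth_periodic (θ : ℝ) : Function.Periodic (sawtooth θ) 1 := fun r => by
  rw [sawtooth, sawtooth, Int.fract_add_one]

theorem sawtooth_nonneg (hθ₀ : 0 ≤ θ) (hθ₁ : θ ≤ 1) (r : ℝ) : 0 ≤ sawtooth θ r :=
  le_min (mul_nonneg (sub_nonneg.2 hθ₁) (Int.fract_nonneg r))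
    (mul_nonneg hθ₀ (sub_nonneg.2 (Int.fract_lt_one r).le))

theorem sawtooth_le_fract (hθ₀ : 0 ≤ θ) (r : ℝ) : sawtooth θ r ≤ Int.fract r :=
  (min_le_left _ _).trans (mul_le_of_le_one_left (Int.fract_nonneg r) (sub_le_self 1 hθ₀))

theorem sawtooth_le_one_sub_fract (hθ₁ : θ ≤ 1) (r : ℝ) : sawtooth θ r ≤ 1 - Int.fract r :=
  (min_le_right _ _).trans (mul_le_of_le_one_left (sub_nonneg.2 (Int.fract_lt_one r).le) hθ₁)

theorem lipschitzWith_sawtooth (hθ₀ : 0 ≤ θ) (hθ₁ : θ ≤ 1) : LipschitzWith 1 (sawtooth θ) := by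
  suffices hle : ∀ r t, r ≤ t → |sawtooth θ r - sawtooth θ t| ≤ t - r by
    refine .of_dist_le_mul fun r t => ?_
    rw [NNReal.coe_one, one_mul, Real.dist_eq, Real.dist_eq]
    rcases le_total r t with h | h
    · exact (hle r t h).trans (by rw [abs_sub_comm]; exact le_abs_self _)
    · exact (abs_sub_comm _ _).trans_le ((hle t r h).trans (le_abs_self _))
  intro r t hrt
  have hr := Int.floor_add_fract r
  have ht := Int.floor_add_fract t
  rcases (Int.floor_mono hrt).eq_or_lt with hfloor | hfloor
  · have hfract : Int.fract t - Int.fract r = t - r := by rw [hfloor] at hr; linarith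
    refine (abs_min_sub_min_le_max _ _ _ _).trans (max_le ?_ ?_) <;> rw [abs_le] <;>
      constructor <;> nlinarith
  · have hfloor : (⌊r⌋ : ℝ) + 1 ≤ ⌊t⌋ := by exact_mod_cast hfloor
    rw [abs_le]
    constructor <;> linarith [sawtooth_nonneg hθ₀ hθ₁ r, sawtooth_nonneg hθ₀ hθ₁ t,
      sawtooth_le_one_sub_fract hθ₁ r, sawtooth_le_fract hθ₀ t, Int.fract_lt_one r,
      Int.fract_nonneg t]

theorem deriv_sawtooth_of_lt (hθ₁ : θ ≤ 1) {r : ℝ} (hr : r ∈ Ioo 0 θ) :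
    deriv (sawtooth θ) r = 1 - θ := by
  have heq : sawtooth θ =ᶠ[𝓝 r] fun t => (1 - θ) * t := by
    filter_upwards [Ioo_mem_nhds hr.1 hr.2] with t ht
    rw [sawtooth, Int.fract_eq_self.2 ⟨ht.1.le, ht.2.trans_le hθ₁⟩, min_eq_left]
    linarith [ht.2]
  simpa only [id_eq, mul_one] using
    (heq.hasDerivAt_iff.2 ((hasDerivAt_id r).const_mul (1 - θ))).deriv

theorem deriv_sawtooth_of_gt (hθ₀ : 0 ≤ θ) {r : ℝ} (hr : r ∈ Ioo θ 1) :
    deriv (sawtooth θ) r = -θ := by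
  have heq : sawtooth θ =ᶠ[𝓝 r] fun t => θ * (1 - t) := by
    filter_upwards [Ioo_mem_nhds hr.1 hr.2] with t ht
    rw [sawtooth, Int.fract_eq_self.2 ⟨hθ₀.trans ht.1.le, ht.2⟩, min_eq_right]
    linarith [ht.1]
  simpa only [mul_neg, mul_one] using
    (heq.hasDerivAt_iff.2 (((hasDerivAt_id r).const_sub 1).const_mul θ)).deriv

theorem intervalIntegral_comp_deriv_sawtooth (hθ₀ : 0 ≤ θ) (hθ₁ : θ ≤ 1) (G : ℝ → ℝ) :
    ∫ r in (0 : ℝ)..1, G (deriv (sawtooth θ) r) = θ * G (1 - θ) + (1 - θ) * G (-θ) := by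
  have hleft : EqOn (fun r => G (deriv (sawtooth θ) r)) (fun _ => G (1 - θ)) (Ioo 0 θ) :=
    fun r hr => congrArg G (deriv_sawtooth_of_lt hθ₁ hr)
  have hright : EqOn (fun r => G (deriv (sawtooth θ) r)) (fun _ => G (-θ)) (Ioo θ 1) :=
    fun r hr => congrArg G (deriv_sawtooth_of_gt hθ₀ hr)
  rw [← intervalIntegral.integral_add_adjacent_intervals
      (intervalIntegrable_const.congr_uIoo (uIoo_of_le hθ₀ ▸ hleft.symm))
      (intervalIntegrable_const.congr_uIoo (uIoo_of_le hθ₁ ▸ hright.symm)),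
    intervalIntegral.integral_congr_Ioo_of_le hθ₀ hleft,
    intervalIntegral.integral_congr_Ioo_of_le hθ₁ hright, intervalIntegral.integral_const,
    intervalIntegral.integral_const, sub_zero, smul_eq_mul, smul_eq_mul]

end Sawtooth

section RankOneConvexity

variable {N : ℕ} {F : Type*} [NormedAddCommGroup F] [NormedSpace ℝ F]

/-- Convexity of `H` along the segments joining matrices that differ by a rank-one matrix with
columns in the subspace `V`. -/
def IsRankOneConvexOn (V : Submodule ℝ F) (H : (EN N →L[ℝ] F) → ℝ) : Prop :=
  ∀ ξ ξ', (∀ v, (ξ - ξ') v ∈ V) → (∃ a w, ξ - ξ' = (innerSL ℝ w).smulRight a) →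
    ∀ θ : ℝ, 0 ≤ θ → θ ≤ 1 → H (θ • ξ + (1 - θ) • ξ') ≤ θ * H ξ + (1 - θ) * H ξ'

theorem IsQuasiconvexOn.isRankOneConvexOn [FiniteDimensional ℝ F] {V : Submodule ℝ F}
    {H : (EN N →L[ℝ] F) → ℝ} (h : IsQuasiconvexOn V H) (hH : Continuous H) :
    IsRankOneConvexOn V H := by
  rintro ξ ξ' hV ⟨a, w, hR⟩ θ hθ₀ hθ₁
  rcases eq_or_ne w 0 with rfl | hw
  · obtain rfl : ξ = ξ' := sub_eq_zero.1 (hR.trans (by ext; simp))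
    rw [← add_smul, ← add_mul, add_sub_cancel, one_smul, one_mul]
  have ha : a ∈ V := by
    have hRw := hV w
    rw [hR, ContinuousLinearMap.smulRight_apply, innerSL_apply_apply] at hRw
    exact (V.smul_mem_iff (inner_self_ne_zero.2 hw)).1 hRw
  have hjensen := h.le_intervalIntegral_deriv hH (lipschitzWith_sawtooth hθ₀ hθ₁)
    (sawtooth_periodic θ) (sawtooth_nonneg hθ₀ hθ₁)
    (fun r => (sawtooth_le_fract hθ₀ r).trans (Int.fract_lt_one r).le) ha hw
    (θ • ξ + (1 - θ) • ξ')
  rw [← hR, intervalIntegral_comp_deriv_sawtooth hθ₀ hθ₁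
    fun c => H (θ • ξ + (1 - θ) • ξ' + c • (ξ - ξ'))] at hjensen
  convert hjensen using 4 <;> module

end RankOneConvexity

theorem statement_6_general {N : ℕ} {F : Type*} [NormedAddCommGroup F] [NormedSpace ℝ F]
    [FiniteDimensional ℝ F] {f : EN N → (EN N →L[ℝ] F) → ℝ} {β : ℝ} {L : ℝ≥0}
    (hf : IsPeriodicIntegrand f β L) (V : Submodule ℝ F) :
    IsQuasiconvexOn V (homDensity f V) ∧ IsRankOneConvexOn V (homDensity f V) :=
  have hquasi := hf.isQuasiconvexOn_homDensity V
  ⟨hquasi, hquasi.isRankOneConvexOn (hf.lipschitzWith_homDensity V).continuous⟩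

/-- Tangential quasiconvexity of `Tf_hom`: for every
`s ∈ M`, `ξ ∈ [T_s M]^N` and every `φ ∈ W^{1,∞}_0(Q;T_s M)` one has
`Tf_hom(s,ξ) ≤ ∫_Q Tf_hom(s,ξ+∇φ)`; in particular `Tf_hom(s,·)` is rank-one
convex on `[T_s M]^N`. -/
theorem statement_6
    (N d : ℕ) (M : Set (EN d)) (hM : IsNiceManifold d M)
    (f : EN N → Mat d N → ℝ) (α β L : ℝ) (hf : StdIntegrand N d f α β L) :
    ∀ s ∈ M, ∀ ξ : Mat d N, TangentCols M s ξ →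
      (∀ (φ : EN N → EN d) (K : ℝ≥0), LipschitzWith K φ →
        (∀ x, φ x ∈ TangentSet M s) → (∀ x, x ∉ unitCube N → φ x = 0) →
        Tfhom f M s ξ ≤ ∫ y in unitCube N, Tfhom f M s (ξ + fderiv ℝ φ y)) ∧
      (∀ ξ' : Mat d N, TangentCols M s ξ' →
        (∃ (a : EN d) (w : EN N),
          ξ - ξ' = ContinuousLinearMap.smulRight (innerSL ℝ w) a) →
        ∀ θ : ℝ, 0 ≤ θ → θ ≤ 1 →
          Tfhom f M s (θ • ξ + (1 - θ) • ξ') ≤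
            θ * Tfhom f M s ξ + (1 - θ) * Tfhom f M s ξ') := by
  intro s hs ξ hξ
  obtain ⟨m, -, hm⟩ := hM.2.2.2
  obtain ⟨V, hV⟩ := hm.exists_submodule_eq_tangentSet hs
  obtain ⟨hquasi, hrank⟩ := statement_6_general hf.isPeriodicIntegrand V
  simp only [Tfhom_eq_homDensity hV, ← hV]
  exact ⟨fun φ K hK hmem hzero => hquasi ξ φ ⟨⟨K, hK⟩, hmem, hzero⟩,
    fun ξ' hξ' hR => hrank ξ ξ' (fun v => V.sub_mem (hξ.apply_mem hV v) (hξ'.apply_mem hV v)) hR⟩
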